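/- arXiv:1203.6768 — 3 statements merged into one kernel-verified Lean document; each statement's English description precedes it below -/
import Mathlib

section
/- Each λ∈ba(𝒜) decomposes uniquely as λ=λ_c+λ_d where λ_c is strongly continuous and λ_d is strongly discontinuous. Moreover λ_c coincides with the strongly continuous part λ₀ of the Sobczyk–Hammer decomposition λ=λ₀+Σ_n a_n λ_n (λ₀ strongly continuous; the λ_n distinct and {0,1}-valued; a_n≠0; Σ_n|a_n|<∞). -/
open Set Filter Topology

namespace FA

/-- An algebra of subsets of `Ω`. -/
structure SetAlg (Ω : Type*) where
  sets : Set (Set Ω)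
  empty_mem : ∅ ∈ sets
  compl_mem : ∀ ⦃A⦄, A ∈ sets → Aᶜ ∈ sets
  union_mem : ∀ ⦃A B⦄, A ∈ sets → B ∈ sets → A ∪ B ∈ sets

/-- A bounded, finitely additive real-valued set function on the algebra `𝒜`,
i.e. an element of `ba(𝒜)`. -/
structure BAMeasure {Ω : Type*} (𝒜 : SetAlg Ω) where
  toFun : Set Ω → ℝ
  map_empty : toFun ∅ = 0
  additive : ∀ ⦃A B : Set Ω⦄, A ∈ 𝒜.sets → B ∈ 𝒜.sets → Disjoint A B →
      toFun (A ∪ B) = toFun A + toFun B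
  bounded : ∃ M : ℝ, ∀ A ∈ 𝒜.sets, |toFun A| ≤ M

variable {Ω : Type*} {𝒜 : SetAlg Ω}

/-- Total variation `|λ|(A) = λ⁺(A) + λ⁻(A)`. -/
noncomputable def var (lam : BAMeasure 𝒜) (A : Set Ω) : ℝ :=
  sSup {x | ∃ B ∈ 𝒜.sets, B ⊆ A ∧ x = lam.toFun B} +
  sSup {x | ∃ B ∈ 𝒜.sets, B ⊆ A ∧ x = -lam.toFun B}

/-- The outer measure `|λ|*(B) = inf {|λ|(A) : A ∈ 𝒜, B ⊆ A}`. -/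
noncomputable def outer (lam : BAMeasure 𝒜) (B : Set Ω) : ℝ :=
  sInf {x | ∃ A ∈ 𝒜.sets, B ⊆ A ∧ x = var lam A}

/-- `𝒜`-simple functions. -/
def IsSimple (𝒜 : SetAlg Ω) (f : Ω → ℝ) : Prop :=
  (Set.range f).Finite ∧ ∀ r : ℝ, f ⁻¹' {r} ∈ 𝒜.sets

/-- `λ`-convergence: `(f n)` converges to `g` in `λ`-measure. -/
def LConv (lam : BAMeasure 𝒜) (f : ℕ → Ω → ℝ) (g : Ω → ℝ) : Prop :=
  ∀ c > (0:ℝ), Tendsto (fun n => outer lam {ω | c < |f n ω - g ω|}) atTop (𝓝 0)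

/-- `λ`-Cauchy sequences. -/
def LCauchy (lam : BAMeasure 𝒜) (f : ℕ → Ω → ℝ) : Prop :=
  ∀ c > (0:ℝ), ∀ ε > (0:ℝ), ∃ N : ℕ, ∀ p q : ℕ,
    outer lam {ω | c < |f (N + p) ω - f (N + q) ω|} < ε

/-- `L⁰(λ)`: `λ`-limits of sequences of `𝒜`-simple functions. -/
def L0 (lam : BAMeasure 𝒜) : Set (Ω → ℝ) :=
  {f | ∃ s : ℕ → Ω → ℝ, (∀ n, IsSimple 𝒜 (s n)) ∧ LConv lam s f}

/-- The metric of `L⁰(λ)`: `d(f,g) = inf {c + |λ|*(|f-g| ≥ c) : c > 0}`. -/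
noncomputable def dL0 (lam : BAMeasure 𝒜) (f g : Ω → ℝ) : ℝ :=
  sInf {x | ∃ c > (0:ℝ), x = c + outer lam {ω | c ≤ |f ω - g ω|}}

/-- A set `K` is bounded in `L⁰(λ)` if `lim_{c→∞} sup_{f∈K} |λ|*(|f|>c) = 0`. -/
def BddL0 (lam : BAMeasure 𝒜) (K : Set (Ω → ℝ)) : Prop :=
  ∀ ε > (0:ℝ), ∃ c₀ : ℝ, ∀ c ≥ c₀, ∀ f ∈ K, outer lam {ω | c < |f ω|} < ε

/-- The nonnegative elements of `L⁰(λ)`. -/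
def L0pos (lam : BAMeasure 𝒜) : Set (Ω → ℝ) := {f ∈ L0 lam | ∀ ω, 0 ≤ f ω}

/-- The elementary integral of a simple function with respect to a set function. -/
noncomputable def simpleIntegral (m : Set Ω → ℝ) (f : Ω → ℝ) : ℝ :=
  ∑ᶠ r : ℝ, r * m (f ⁻¹' {r})

/-- Dunford–Schwartz integrability: there is a sequence of simple functions converging to `f`
in `λ`-measure which is Cauchy in mean. -/
def MemL1 (lam : BAMeasure 𝒜) (f : Ω → ℝ) : Prop :=
  ∃ s : ℕ → Ω → ℝ, (∀ n, IsSimple 𝒜 (s n)) ∧ LConv lam s f ∧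
    ∀ ε > (0:ℝ), ∃ N : ℕ, ∀ m ≥ N, ∀ n ≥ N,
      simpleIntegral (var lam) (fun ω => |s m ω - s n ω|) < ε

/-- `L¹(λ)`. -/
def L1 (lam : BAMeasure 𝒜) : Set (Ω → ℝ) := {f | MemL1 lam f}

open scoped Classical in
/-- The Dunford–Schwartz integral `∫ f dλ`. -/
noncomputable def integral (lam : BAMeasure 𝒜) (f : Ω → ℝ) : ℝ :=
  if h : MemL1 lam f then
    limUnder atTop (fun n => simpleIntegral lam.toFun (h.choose n))
  else 0

open scoped Classical in
/-- The `L¹(λ)` seminorm `∫ |f| d|λ|`. -/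
noncomputable def l1Norm (lam : BAMeasure 𝒜) (f : Ω → ℝ) : ℝ :=
  if h : MemL1 lam f then
    limUnder atTop (fun n => simpleIntegral (var lam) (fun ω => |h.choose n ω|))
  else 0

/-- A set is bounded in `L¹(μ)` if the integrals `∫|f| d|μ|` are uniformly bounded. -/
def BddL1 (mu : BAMeasure 𝒜) (K : Set (Ω → ℝ)) : Prop :=
  ∃ M : ℝ, ∀ f ∈ K, l1Norm mu f ≤ M

/-- Finitely additive probability measures. -/
def IsFAProb (mu : BAMeasure 𝒜) : Prop :=
  mu.toFun Set.univ = 1 ∧ ∀ A ∈ 𝒜.sets, 0 ≤ mu.toFun A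

/-- `μ ∈ 𝔓_*(λ)`: a finitely additive probability with `|μ| ≤ c |λ|` and the same null
sets as `λ`. -/
def PStar (lam mu : BAMeasure 𝒜) : Prop :=
  IsFAProb mu ∧ (∃ c : ℝ, 0 ≤ c ∧ ∀ A ∈ 𝒜.sets, var mu A ≤ c * var lam A) ∧
  ∀ A ∈ 𝒜.sets, (mu.toFun A = 0 ↔ var lam A = 0)

/-- `μ ∈ 𝔓_*(λ; K)`. -/
def PStarWith (lam : BAMeasure 𝒜) (K : Set (Ω → ℝ)) (mu : BAMeasure 𝒜) : Prop :=
  PStar lam mu ∧ K ⊆ L1 mu ∧ BddL1 mu K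

/-- `f` is a `λ`-a.s. lower bound of `K`. -/
def ASLowerBound (lam : BAMeasure 𝒜) (f : Ω → ℝ) (K : Set (Ω → ℝ)) : Prop :=
  ∀ c > (0:ℝ), ∀ k ∈ K, outer lam {ω | k ω < f ω - c} = 0

/-- Absolute continuity `μ ≪ λ` for bounded finitely additive set functions. -/
def AbsCont (mu lam : BAMeasure 𝒜) : Prop :=
  ∀ ε > (0:ℝ), ∃ δ > (0:ℝ), ∀ A ∈ 𝒜.sets, var lam A < δ → var mu A < ε

/-- `λ ∈ ba₀(𝒜)`: the range of `λ` is finite. -/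
def FiniteRange (lam : BAMeasure 𝒜) : Prop := (lam.toFun '' 𝒜.sets).Finite

/-- `μ ∈ ba₀(λ)`. -/
def BA0rel (lam mu : BAMeasure 𝒜) : Prop := FiniteRange mu ∧ AbsCont mu lam

/-- Strong continuity: arbitrarily fine finite partitions. -/
def StronglyContinuous (lam : BAMeasure 𝒜) : Prop :=
  ∀ ε > (0:ℝ), ∃ (N : ℕ) (A : Fin N → Set Ω), (∀ n, A n ∈ 𝒜.sets) ∧
    Pairwise (Function.onFun Disjoint A) ∧ (⋃ n, A n) = Set.univ ∧
    ∀ n, var lam (A n) < ε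

/-- Orthogonality of bounded finitely additive set functions. -/
def Orthogonal (mu nu : BAMeasure 𝒜) : Prop :=
  ∀ ε > (0:ℝ), ∃ A ∈ 𝒜.sets, var mu A < ε ∧ var nu Aᶜ < ε

/-- Strong discontinuity: orthogonal to every strongly continuous element of `ba(𝒜)`. -/
def StronglyDiscontinuous (mu : BAMeasure 𝒜) : Prop :=
  ∀ nu : BAMeasure 𝒜, StronglyContinuous nu → Orthogonal mu nu

/-- Countable additivity of `λ` on the algebra `𝒜`. -/
def CountablyAdditive (lam : BAMeasure 𝒜) : Prop :=
  ∀ A : ℕ → Set Ω, (∀ n, A n ∈ 𝒜.sets) → Pairwise (Function.onFun Disjoint A) →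
    (⋃ n, A n) ∈ 𝒜.sets → HasSum (fun n => lam.toFun (A n)) (lam.toFun (⋃ n, A n))

/-- `𝒜` is a σ-algebra. -/
def IsSigmaAlg (𝒜 : SetAlg Ω) : Prop :=
  ∀ A : ℕ → Set Ω, (∀ n, A n ∈ 𝒜.sets) → (⋃ n, A n) ∈ 𝒜.sets

/-- Linearity of a functional on `L⁰(λ)`. -/
def LinearOnL0 (lam : BAMeasure 𝒜) (φ : (Ω → ℝ) → ℝ) : Prop :=
  (∀ f ∈ L0 lam, ∀ g ∈ L0 lam, φ (f + g) = φ f + φ g) ∧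
  (∀ a : ℝ, ∀ f ∈ L0 lam, φ (a • f) = a * φ f)

/-- Continuity of a functional on `L⁰(λ)` with respect to the metric `d`. -/
def ContinuousOnL0 (lam : BAMeasure 𝒜) (φ : (Ω → ℝ) → ℝ) : Prop :=
  ∀ f ∈ L0 lam, ∀ ε > (0:ℝ), ∃ δ > (0:ℝ), ∀ g ∈ L0 lam, dL0 lam g f < δ → |φ g - φ f| < ε

/-!
The strongly continuous elements form a band of `ba(𝒜)` and the strongly discontinuous ones are by
definition its disjoint complement, so the decomposition is the Riesz decomposition with respect to
a band `S`. For `L ≥ 0`, monotone limits and Zorn's lemma give a maximal `m ∈ S` with `0 ≤ m ≤ L`;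
if `τ ∈ S`, then `m + (L - m) ∧ |τ|` is again such an element, so `(L - m) ∧ |τ| = 0`. Two
decompositions differ by an element of `S` orthogonal to itself, that is, by zero.

A `{0,1}`-valued set function charges at most one cell of any partition, so it is orthogonal to
every strongly continuous one. As the orthogonal complement is closed in the variation norm, it
also contains `Σ_n a_n λ_n`, and the second claim follows from uniqueness.
-/

lemma SetAlg.isSetAlgebra (𝒜 : SetAlg Ω) : MeasureTheory.IsSetAlgebra 𝒜.sets :=
  ⟨𝒜.empty_mem, 𝒜.compl_mem, 𝒜.union_mem⟩

namespace BAMeasure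

instance : CoeFun (BAMeasure 𝒜) fun _ => Set Ω → ℝ := ⟨toFun⟩

lemma toFun_injective : Function.Injective (toFun : BAMeasure 𝒜 → Set Ω → ℝ) := by
  rintro ⟨⟩ ⟨⟩ rfl
  rfl

section Additivity

variable {A B : Set Ω} (μ : BAMeasure 𝒜)

lemma map_inter_add_sdiff (hA : A ∈ 𝒜.sets) (hB : B ∈ 𝒜.sets) :
    μ (A ∩ B) + μ (A \ B) = μ A := by
  rw [← μ.additive (𝒜.isSetAlgebra.inter_mem hA hB) (𝒜.isSetAlgebra.sdiff_mem hA hB)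
    disjoint_sdiff_inter.symm, inter_union_sdiff]

lemma map_sdiff (hA : A ∈ 𝒜.sets) (hB : B ∈ 𝒜.sets) (hBA : B ⊆ A) :
    μ (A \ B) = μ A - μ B := by
  have := μ.map_inter_add_sdiff hA hB
  rw [inter_eq_self_of_subset_right hBA] at this
  linarith

lemma map_compl (hA : A ∈ 𝒜.sets) : μ Aᶜ = μ univ - μ A := by
  rw [compl_eq_univ_sdiff, μ.map_sdiff 𝒜.isSetAlgebra.univ_mem hA (subset_univ A)]

/-- A bounded finitely additive set function as an additive content, which gives access to the
results on finite unions. -/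
def toAddContent : MeasureTheory.AddContent ℝ 𝒜.sets :=
  𝒜.isSetAlgebra.isSetRing.addContent_of_union μ μ.map_empty fun hA hB => μ.additive hA hB

end Additivity

instance : Zero (BAMeasure 𝒜) where
  zero :=
    { toFun := 0
      map_empty := rfl
      additive := fun _ _ _ _ _ => (add_zero 0).symm
      bounded := ⟨0, fun _ _ => abs_zero.le⟩ }

instance : Add (BAMeasure 𝒜) where
  add μ ν :=
    { toFun := μ.toFun + ν.toFun
      map_empty := by simp [μ.map_empty, ν.map_empty]
      additive := fun A B hA hB hAB => by
        simp only [Pi.add_apply, μ.additive hA hB hAB, ν.additive hA hB hAB]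
        ring
      bounded := by
        obtain ⟨M, hM⟩ := μ.bounded
        obtain ⟨N, hN⟩ := ν.bounded
        exact ⟨M + N, fun A hA => (abs_add_le _ _).trans (add_le_add (hM A hA) (hN A hA))⟩ }

instance : SMul ℝ (BAMeasure 𝒜) where
  smul r μ :=
    { toFun := r • μ.toFun
      map_empty := by simp [μ.map_empty]
      additive := fun A B hA hB hAB => by
        simp only [Pi.smul_apply, μ.additive hA hB hAB, smul_add]
      bounded := by
        obtain ⟨M, hM⟩ := μ.bounded
        refine ⟨|r| * M, fun A hA => ?_⟩
        rw [Pi.smul_apply, smul_eq_mul, abs_mul]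
        exact mul_le_mul_of_nonneg_left (hM A hA) (abs_nonneg r) }

instance : Neg (BAMeasure 𝒜) where
  neg μ :=
    { toFun := -μ.toFun
      map_empty := by simp [μ.map_empty]
      additive := fun A B hA hB hAB => by
        simp only [Pi.neg_apply, μ.additive hA hB hAB, neg_add]
      bounded := by simpa only [Pi.neg_apply, abs_neg] using μ.bounded }

instance : AddCommGroup (BAMeasure 𝒜) where
  add_assoc _ _ _ := toFun_injective (add_assoc _ _ _)
  zero_add _ := toFun_injective (zero_add _)
  add_zero _ := toFun_injective (add_zero _)
  add_comm _ _ := toFun_injective (add_comm _ _)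
  neg_add_cancel _ := toFun_injective (neg_add_cancel _)
  nsmul := nsmulRec
  zsmul := zsmulRec

/-- Evaluation of set functions as an additive map. -/
def toFunHom : BAMeasure 𝒜 →+ (Set Ω → ℝ) where
  toFun := toFun
  map_zero' := rfl
  map_add' _ _ := rfl

instance : Module ℝ (BAMeasure 𝒜) :=
  toFun_injective.module ℝ toFunHom fun _ _ => rfl

@[simp] lemma zero_apply (A : Set Ω) : (0 : BAMeasure 𝒜) A = 0 := rfl

@[simp] lemma add_apply (μ ν : BAMeasure 𝒜) (A : Set Ω) : (μ + ν) A = μ A + ν A := rfl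

@[simp] lemma neg_apply (μ : BAMeasure 𝒜) (A : Set Ω) : (-μ) A = -μ A := rfl

@[simp] lemma smul_apply (r : ℝ) (μ : BAMeasure 𝒜) (A : Set Ω) : (r • μ) A = r * μ A := rfl

@[simp] lemma sub_apply (μ ν : BAMeasure 𝒜) (A : Set Ω) : (μ - ν) A = μ A - ν A :=
  congrFun (map_sub toFunHom μ ν) A

@[simp] lemma sum_apply {ι : Type*} (s : Finset ι) (μ : ι → BAMeasure 𝒜) (A : Set Ω) :
    (∑ i ∈ s, μ i) A = ∑ i ∈ s, μ i A :=
  (congrFun (map_sum toFunHom μ s) A).trans (Finset.sum_apply A s _)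

/-- The setwise order on `𝒜`. It is only a preorder, because the values of an element of `ba(𝒜)`
outside `𝒜` are arbitrary. -/
instance : Preorder (BAMeasure 𝒜) where
  le μ ν := ∀ A ∈ 𝒜.sets, μ A ≤ ν A
  le_refl _ _ _ := le_rfl
  le_trans _ _ _ h₁ h₂ A hA := (h₁ A hA).trans (h₂ A hA)

instance : IsOrderedAddMonoid (BAMeasure 𝒜) where
  add_le_add_left _ _ h κ A hA := add_le_add_left (h A hA) (κ A)

section Nonneg

variable {μ : BAMeasure 𝒜} {A B : Set Ω}

lemma map_mono (hμ : 0 ≤ μ) (hA : A ∈ 𝒜.sets) (hB : B ∈ 𝒜.sets) (hAB : A ⊆ B) :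
    μ A ≤ μ B := by
  have hdiff : 0 ≤ μ (B \ A) := hμ _ (𝒜.isSetAlgebra.sdiff_mem hB hA)
  linarith [μ.map_sdiff hB hA hAB]

lemma map_union_le (hμ : 0 ≤ μ) (hA : A ∈ 𝒜.sets) (hB : B ∈ 𝒜.sets) :
    μ (A ∪ B) ≤ μ A + μ B := by
  have hBA := 𝒜.isSetAlgebra.sdiff_mem hB hA
  rw [← union_sdiff_self, μ.additive hA hBA disjoint_sdiff_right]
  linarith [map_mono hμ hBA hB sdiff_subset]

end Nonneg

section PosPart

variable {μ ν : BAMeasure 𝒜} {A B : Set Ω}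

lemma le_sSup_subset (μ : BAMeasure 𝒜) (hB : B ∈ 𝒜.sets) (hBA : B ⊆ A) :
    μ B ≤ sSup {x | ∃ B ∈ 𝒜.sets, B ⊆ A ∧ x = μ B} := by
  obtain ⟨M, hM⟩ := μ.bounded
  refine le_csSup ⟨M, ?_⟩ ⟨B, hB, hBA, rfl⟩
  rintro _ ⟨C, hC, -, rfl⟩
  exact (le_abs_self _).trans (hM C hC)

lemma sSup_subset_le {x : ℝ} (h : ∀ B ∈ 𝒜.sets, B ⊆ A → μ B ≤ x) :
    sSup {x | ∃ B ∈ 𝒜.sets, B ⊆ A ∧ x = μ B} ≤ x := by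
  refine csSup_le ⟨_, ∅, 𝒜.empty_mem, empty_subset A, rfl⟩ ?_
  rintro _ ⟨B, hB, hBA, rfl⟩
  exact h B hB hBA

/-- The positive part `μ⁺(A) = sup {μ(B) : B ∈ 𝒜, B ⊆ A}`. -/
noncomputable instance : PosPart (BAMeasure 𝒜) where
  posPart μ :=
    { toFun := fun A => sSup {x | ∃ B ∈ 𝒜.sets, B ⊆ A ∧ x = μ B}
      map_empty := by
        refine le_antisymm (sSup_subset_le fun B _ hB => ?_) ?_
        · rw [subset_empty_iff.1 hB, μ.map_empty]
        · exact μ.map_empty.ge.trans (μ.le_sSup_subset 𝒜.empty_mem subset_rfl)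
      additive := fun A B hA _ hAB => by
        apply le_antisymm
        · refine sSup_subset_le fun C hC hCAB => ?_
          rw [← μ.map_inter_add_sdiff hC hA]
          exact add_le_add
            (μ.le_sSup_subset (𝒜.isSetAlgebra.inter_mem hC hA) inter_subset_right)
            (μ.le_sSup_subset (𝒜.isSetAlgebra.sdiff_mem hC hA) (sdiff_subset_iff.2 hCAB))
        · rw [← le_sub_iff_add_le]
          refine sSup_subset_le fun C hC hCA => ?_
          rw [le_sub_comm]
          refine sSup_subset_le fun D hD hDB => ?_
          rw [le_sub_iff_add_le', ← μ.additive hC hD (hAB.mono hCA hDB)]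
          exact μ.le_sSup_subset (𝒜.union_mem hC hD) (union_subset_union hCA hDB)
      bounded := by
        obtain ⟨M, hM⟩ := μ.bounded
        refine ⟨M, fun A hA => abs_le.2 ⟨?_, ?_⟩⟩
        · exact (neg_le_of_abs_le (hM A hA)).trans (μ.le_sSup_subset hA subset_rfl)
        · exact sSup_subset_le fun B hB _ => (le_abs_self _).trans (hM B hB) }

lemma le_posPart_apply (μ : BAMeasure 𝒜) (hB : B ∈ 𝒜.sets) (hBA : B ⊆ A) : μ B ≤ μ⁺ A :=
  μ.le_sSup_subset hB hBA

lemma posPart_apply_le {x : ℝ} (h : ∀ B ∈ 𝒜.sets, B ⊆ A → μ B ≤ x) : μ⁺ A ≤ x :=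
  sSup_subset_le h

lemma posPart_apply_nonneg (μ : BAMeasure 𝒜) (A : Set Ω) : 0 ≤ μ⁺ A :=
  μ.map_empty.ge.trans (μ.le_posPart_apply 𝒜.empty_mem (empty_subset A))

lemma le_posPart (μ : BAMeasure 𝒜) : μ ≤ μ⁺ := fun _ hA => μ.le_posPart_apply hA subset_rfl

lemma posPart_le (hμν : μ ≤ ν) (hν : 0 ≤ ν) : μ⁺ ≤ ν := fun _ hA =>
  posPart_apply_le fun B hB hBA => (hμν B hB).trans (map_mono hν hB hA hBA)

/-- The infimum `μ ∧ ν = μ - (μ - ν)⁺`. -/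
noncomputable instance : Min (BAMeasure 𝒜) where
  min μ ν := μ - (μ - ν)⁺

lemma inf_le_left (μ ν : BAMeasure 𝒜) : μ ⊓ ν ≤ μ :=
  sub_le_self μ fun A _ => (μ - ν).posPart_apply_nonneg A

lemma inf_le_right (μ ν : BAMeasure 𝒜) : μ ⊓ ν ≤ ν :=
  sub_le_comm.1 (μ - ν).le_posPart

lemma inf_nonneg (hμ : 0 ≤ μ) (hν : 0 ≤ ν) : 0 ≤ μ ⊓ ν :=
  sub_nonneg.2 (posPart_le (sub_le_self μ hν) hμ)

end PosPart

section Variation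

variable {μ ν : BAMeasure 𝒜} {A B : Set Ω}

/-- The total variation `|μ| = μ⁺ + μ⁻` as an element of `ba(𝒜)`; its values are `var μ`. -/
noncomputable def variation (μ : BAMeasure 𝒜) : BAMeasure 𝒜 := μ⁺ + (-μ)⁺

@[simp] lemma variation_apply (μ : BAMeasure 𝒜) (A : Set Ω) : variation μ A = var μ A := rfl

lemma var_eq_posPart_add (μ : BAMeasure 𝒜) (A : Set Ω) : var μ A = μ⁺ A + (-μ)⁺ A := rfl

lemma variation_nonneg (μ : BAMeasure 𝒜) : 0 ≤ variation μ := fun A _ =>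
  add_nonneg (μ.posPart_apply_nonneg A) ((-μ).posPart_apply_nonneg A)

lemma var_nonneg (μ : BAMeasure 𝒜) (hA : A ∈ 𝒜.sets) : 0 ≤ var μ A := μ.variation_nonneg A hA

lemma var_mono (μ : BAMeasure 𝒜) (hA : A ∈ 𝒜.sets) (hB : B ∈ 𝒜.sets) (hAB : A ⊆ B) :
    var μ A ≤ var μ B :=
  map_mono μ.variation_nonneg hA hB hAB

lemma abs_le_var (μ : BAMeasure 𝒜) (hA : A ∈ 𝒜.sets) : |μ A| ≤ var μ A := by
  rw [var_eq_posPart_add, abs_le]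
  have hpos := μ.le_posPart A hA
  have hneg := (-μ).le_posPart A hA
  rw [neg_apply] at hneg
  constructor <;> linarith [μ.posPart_apply_nonneg A, (-μ).posPart_apply_nonneg A]

lemma var_le_of_abs_le (h : ∀ A ∈ 𝒜.sets, |μ A| ≤ ν A) (hA : A ∈ 𝒜.sets) : var μ A ≤ ν A := by
  have hpos : μ⁺ A ≤ (ν A + μ A) / 2 := posPart_apply_le fun B hB hBA => by
    have hdiff := 𝒜.isSetAlgebra.sdiff_mem hA hB
    linarith [le_of_abs_le (h B hB), neg_le_of_abs_le (h _ hdiff), μ.map_sdiff hA hB hBA,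
      ν.map_sdiff hA hB hBA]
  have hneg : (-μ)⁺ ≤ μ⁺ - μ :=
    posPart_le (fun B _ => by simp [posPart_apply_nonneg]) (sub_nonneg.2 μ.le_posPart)
  have := hneg A hA
  rw [sub_apply] at this
  rw [var_eq_posPart_add]
  linarith

lemma var_le_two_mul {M : ℝ} (h : ∀ B ∈ 𝒜.sets, B ⊆ A → |μ B| ≤ M) : var μ A ≤ 2 * M := by
  rw [two_mul]
  exact add_le_add (posPart_apply_le fun B hB hBA => le_of_abs_le (h B hB hBA))
    (posPart_apply_le (μ := -μ) fun B hB hBA => neg_le_of_neg_le (neg_le_of_abs_le (h B hB hBA)))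

lemma var_le_of_nonneg_of_le (hμ : 0 ≤ μ) (hμν : μ ≤ ν) (hA : A ∈ 𝒜.sets) : var μ A ≤ ν A :=
  var_le_of_abs_le (fun B hB => (abs_of_nonneg (hμ B hB)).trans_le (hμν B hB)) hA

lemma var_of_nonneg (hμ : 0 ≤ μ) (hA : A ∈ 𝒜.sets) : var μ A = μ A :=
  (var_le_of_nonneg_of_le hμ le_rfl hA).antisymm ((le_abs_self _).trans (μ.abs_le_var hA))

lemma var_add_le (μ ν : BAMeasure 𝒜) (hA : A ∈ 𝒜.sets) : var (μ + ν) A ≤ var μ A + var ν A :=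
  var_le_of_abs_le (ν := variation μ + variation ν)
    (fun _ hB => (abs_add_le _ _).trans (add_le_add (μ.abs_le_var hB) (ν.abs_le_var hB))) hA

lemma var_le_var_add_var_sub (μ ν : BAMeasure 𝒜) (hA : A ∈ 𝒜.sets) :
    var μ A ≤ var ν A + var (μ - ν) A := by
  simpa only [add_sub_cancel] using var_add_le ν (μ - ν) hA

lemma var_smul_le (r : ℝ) (μ : BAMeasure 𝒜) (hA : A ∈ 𝒜.sets) : var (r • μ) A ≤ |r| * var μ A :=
  var_le_of_abs_le (ν := |r| • variation μ) (fun B hB => by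
    rw [smul_apply, smul_apply, abs_mul]
    exact mul_le_mul_of_nonneg_left (μ.abs_le_var hB) (abs_nonneg r)) hA

end Variation

lemma exists_tendsto_of_monotone {ι : Type*} [Preorder ι] [IsDirectedOrder ι] [Nonempty ι]
    {μ : ι → BAMeasure 𝒜} (hμ : Monotone μ) (hbdd : BddAbove (range μ)) :
    ∃ κ : BAMeasure 𝒜, ∀ A ∈ 𝒜.sets, Tendsto (fun i => μ i A) atTop (𝓝 (κ A)) := by
  obtain ⟨ν, hν⟩ := hbdd
  have hbound : ∀ A ∈ 𝒜.sets, ∀ i, μ i A ≤ ν A := fun A hA i => hν (mem_range_self i) A hA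
  have hlim : ∀ A ∈ 𝒜.sets, Tendsto (fun i => μ i A) atTop (𝓝 (⨆ i, μ i A)) := fun A hA =>
    tendsto_atTop_ciSup (fun _ _ hij => hμ hij A hA) ⟨ν A, forall_mem_range.2 (hbound A hA)⟩
  refine ⟨⟨fun A => ⨆ i, μ i A, ?_, fun A B hA hB hAB => ?_, ?_⟩, hlim⟩
  · simp only [map_empty, ciSup_const]
  · refine tendsto_nhds_unique (hlim _ (𝒜.union_mem hA hB)) ?_
    simpa only [(μ _).additive hA hB hAB] using (hlim A hA).add (hlim B hB)
  · let i := Classical.arbitrary ι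
    obtain ⟨M, hM⟩ := (μ i).bounded
    obtain ⟨N, hN⟩ := ν.bounded
    refine ⟨max M N, fun A hA => ?_⟩
    have hle : μ i A ≤ ⨆ j, μ j A := le_ciSup ⟨ν A, forall_mem_range.2 (hbound A hA)⟩ i
    exact (abs_le_max_abs_abs hle (ciSup_le (hbound A hA))).trans (max_le_max (hM A hA) (hN A hA))

end BAMeasure

open BAMeasure

section AbsCont

variable {μ ν : BAMeasure 𝒜}

lemma AbsCont.of_var_le_mul {r : ℝ} (h : ∀ A ∈ 𝒜.sets, var ν A ≤ r * var μ A) :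
    AbsCont ν μ := by
  intro ε hε
  obtain ⟨δ, hδ, hrδ⟩ := exists_pos_mul_lt hε |r|
  refine ⟨δ, hδ, fun A hA hμA => ?_⟩
  calc var ν A ≤ r * var μ A := h A hA
    _ ≤ |r| * var μ A := mul_le_mul_of_nonneg_right (le_abs_self r) (μ.var_nonneg hA)
    _ ≤ |r| * δ := mul_le_mul_of_nonneg_left hμA.le (abs_nonneg r)
    _ < ε := hrδ

lemma AbsCont.of_var_le (h : ∀ A ∈ 𝒜.sets, var ν A ≤ var μ A) : AbsCont ν μ :=
  .of_var_le_mul fun A hA => (h A hA).trans_eq (one_mul _).symm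

lemma absCont_smul (r : ℝ) (μ : BAMeasure 𝒜) : AbsCont (r • μ) μ :=
  .of_var_le_mul fun _ hA => var_smul_le r μ hA

end AbsCont

namespace Orthogonal

variable {μ ν τ : BAMeasure 𝒜}

lemma of_absCont (hμ : Orthogonal μ τ) (h : AbsCont ν μ) : Orthogonal ν τ := by
  intro ε hε
  obtain ⟨δ, hδ, hνμ⟩ := h ε hε
  obtain ⟨A, hA, hμA, hτA⟩ := hμ (min δ ε) (lt_min hδ hε)
  exact ⟨A, hA, hνμ A hA (hμA.trans_le (min_le_left δ ε)), hτA.trans_le (min_le_right δ ε)⟩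

lemma add (hμ : Orthogonal μ τ) (hν : Orthogonal ν τ) : Orthogonal (μ + ν) τ := by
  intro ε hε
  obtain ⟨A, hA, hμA, hτA⟩ := hμ (ε / 2) (half_pos hε)
  obtain ⟨B, hB, hνB, hτB⟩ := hν (ε / 2) (half_pos hε)
  have hAB := 𝒜.isSetAlgebra.inter_mem hA hB
  refine ⟨A ∩ B, hAB, ?_, ?_⟩
  · linarith [var_add_le μ ν hAB, μ.var_mono hAB hA inter_subset_left,
      ν.var_mono hAB hB inter_subset_right]
  · have := map_union_le τ.variation_nonneg (𝒜.compl_mem hA) (𝒜.compl_mem hB)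
    simp only [variation_apply] at this
    rw [compl_inter]
    linarith

lemma of_approx (h : ∀ ε > (0 : ℝ), ∃ μ, Orthogonal μ τ ∧ var (ν - μ) univ < ε) :
    Orthogonal ν τ := by
  intro ε hε
  obtain ⟨μ, hμ, hνμ⟩ := h (ε / 2) (half_pos hε)
  obtain ⟨A, hA, hμA, hτA⟩ := hμ (ε / 2) (half_pos hε)
  refine ⟨A, hA, ?_, by linarith⟩
  linarith [ν.var_le_var_add_var_sub μ hA,
    (ν - μ).var_mono hA 𝒜.isSetAlgebra.univ_mem (subset_univ A)]

lemma zero_left (τ : BAMeasure 𝒜) : Orthogonal 0 τ := by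
  intro ε hε
  refine ⟨univ, 𝒜.isSetAlgebra.univ_mem, ?_, ?_⟩
  · rwa [var_of_nonneg le_rfl 𝒜.isSetAlgebra.univ_mem, zero_apply]
  · rwa [compl_univ, ← variation_apply, (variation τ).map_empty]

lemma of_inf_nonpos (h : variation μ ⊓ variation ν ≤ 0) : Orthogonal μ ν := by
  intro ε hε
  have huniv := 𝒜.isSetAlgebra.univ_mem
  -- `(|μ| ∧ |ν|)(Ω) ≤ 0` says that `|μ|(B) - |ν|(B)` comes arbitrarily close to `|μ|(Ω)`.
  obtain ⟨B, hB, hlt⟩ : ∃ B ∈ 𝒜.sets, var μ univ - ε < var μ B - var ν B := by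
    by_contra! hcon
    have hpos : (variation μ - variation ν)⁺ univ ≤ var μ univ - ε :=
      posPart_apply_le fun B hB _ => hcon B hB
    have hinf : var μ univ - (variation μ - variation ν)⁺ univ ≤ 0 := h univ huniv
    linarith
  have hcompl : var μ Bᶜ = var μ univ - var μ B := (variation μ).map_compl hB
  refine ⟨Bᶜ, 𝒜.compl_mem hB, ?_, ?_⟩
  · linarith [ν.var_nonneg hB]
  · rw [compl_compl]
    linarith [μ.var_mono hB huniv (subset_univ B)]

lemma eqOn_zero_of_self (h : Orthogonal μ μ) : EqOn μ 0 𝒜.sets := by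
  have huniv : var μ univ ≤ 0 := le_of_forall_pos_le_add fun ε hε => by
    obtain ⟨B, hB, hμB, hμBc⟩ := h (ε / 2) (half_pos hε)
    have hcompl : var μ Bᶜ = var μ univ - var μ B := (variation μ).map_compl hB
    linarith
  intro A hA
  have hle := μ.var_mono hA 𝒜.isSetAlgebra.univ_mem (subset_univ A)
  exact abs_nonpos_iff.1 ((μ.abs_le_var hA).trans (hle.trans huniv))

end Orthogonal

/-- A band of `ba(𝒜)`, encoded as a subspace closed under absolute continuity and under limits
in the variation norm. Since `ba(𝒜)` is an `L`-space, this agrees with the order-theoretic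
notion. -/
structure IsBand (S : Submodule ℝ (BAMeasure 𝒜)) : Prop where
  mem_of_absCont : ∀ ⦃μ ν : BAMeasure 𝒜⦄, μ ∈ S → AbsCont ν μ → ν ∈ S
  mem_of_approx : ∀ ⦃ν : BAMeasure 𝒜⦄,
    (∀ ε > (0 : ℝ), ∃ μ ∈ S, var (ν - μ) univ < ε) → ν ∈ S

/-- The set functions orthogonal to `τ`. -/
def orthogonalTo (τ : BAMeasure 𝒜) : Submodule ℝ (BAMeasure 𝒜) where
  carrier := {μ | Orthogonal μ τ}
  add_mem' := Orthogonal.add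
  zero_mem' := .zero_left τ
  smul_mem' r μ hμ := hμ.of_absCont (absCont_smul r μ)

lemma isBand_orthogonalTo (τ : BAMeasure 𝒜) : IsBand (orthogonalTo τ) where
  mem_of_absCont _ _ := Orthogonal.of_absCont
  mem_of_approx _ := Orthogonal.of_approx

namespace IsBand

variable {S : Submodule ℝ (BAMeasure 𝒜)}

lemma mem_of_nonneg_of_le (hS : IsBand S) {μ ν : BAMeasure 𝒜} (hμ : μ ∈ S) (hν : 0 ≤ ν)
    (hνμ : ν ≤ variation μ) : ν ∈ S :=
  hS.mem_of_absCont hμ (.of_var_le fun _ hA => var_le_of_nonneg_of_le hν hνμ hA)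

lemma mem_of_hasSum (hS : IsBand S) {ι : Type*} {μ : ι → BAMeasure 𝒜} {ν : BAMeasure 𝒜}
    (hμ : ∀ i, μ i ∈ S) (hsummable : Summable fun i => var (μ i) univ)
    (hν : ∀ A ∈ 𝒜.sets, HasSum (fun i => μ i A) (ν A)) : ν ∈ S := by
  refine hS.mem_of_approx fun ε hε => ?_
  obtain ⟨s, hs⟩ : ∃ s : Finset ι, ∑' i : {i // i ∉ s}, var (μ i) univ < ε / 2 :=
    ((tendsto_order.1 (tendsto_tsum_compl_atTop_zero fun i => var (μ i) univ)).2 _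
      (half_pos hε)).exists
  refine ⟨∑ i ∈ s, μ i, S.sum_mem fun i _ => hμ i, ?_⟩
  have htail : ∀ A ∈ 𝒜.sets, |(ν - ∑ i ∈ s, μ i) A| ≤ ∑' i : {i // i ∉ s}, var (μ i) univ := by
    intro A hA
    rw [BAMeasure.sub_apply, BAMeasure.sum_apply]
    have hcompl : HasSum (fun i : {i // i ∉ s} => μ i A) (ν A - ∑ i ∈ s, μ i A) :=
      (s.hasSum_compl_iff (f := fun i => μ i A)).2 (by rw [sub_add_cancel]; exact hν A hA)
    refine hcompl.norm_le_of_bounded (hsummable.subtype _).hasSum fun i => ?_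
    exact ((μ i).abs_le_var hA).trans
      ((μ i).var_mono hA 𝒜.isSetAlgebra.univ_mem (subset_univ A))
  linarith [var_le_two_mul (A := univ) fun A hA _ => htail A hA]

lemma mem_of_tendsto_of_le (hS : IsBand S) {ι : Type*} {l : Filter ι} [l.NeBot]
    {μ : ι → BAMeasure 𝒜} {κ : BAMeasure 𝒜} (hμ : ∀ i, μ i ∈ S) (hle : ∀ i, μ i ≤ κ)
    (hκ : Tendsto (fun i => μ i univ) l (𝓝 (κ univ))) : κ ∈ S := by
  refine hS.mem_of_approx fun ε hε => ?_
  obtain ⟨i, hi⟩ := (hκ.eventually_const_lt (sub_lt_self (κ univ) hε)).exists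
  refine ⟨μ i, hμ i, ?_⟩
  rw [var_of_nonneg (sub_nonneg.2 (hle i)) 𝒜.isSetAlgebra.univ_mem, BAMeasure.sub_apply]
  linarith

lemma exists_maximal_le (hS : IsBand S) {L : BAMeasure 𝒜} (hL : 0 ≤ L) :
    ∃ μ, Maximal (fun ν => ν ∈ S ∧ 0 ≤ ν ∧ ν ≤ L) μ := by
  refine (zorn_le_nonempty₀ {ν | ν ∈ S ∧ 0 ≤ ν ∧ ν ≤ L} (fun c hcS hc μ₀ hμ₀ => ?_) 0
    ⟨S.zero_mem, le_rfl, hL⟩).imp fun _ hmax => hmax.2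
  have : Nonempty c := ⟨⟨μ₀, hμ₀⟩⟩
  have : IsDirectedOrder c := hc.directedOn.isDirectedOrder
  obtain ⟨κ, hκ⟩ := exists_tendsto_of_monotone (Subtype.mono_coe (· ∈ c))
    ⟨L, forall_mem_range.2 fun μ => (hcS μ.2).2.2⟩
  have hle : ∀ ν : c, ν ≤ κ := fun ν A hA =>
    Monotone.ge_of_tendsto (fun (_ _ : c) (h : _ ≤ _) => h A hA) (hκ A hA) ν
  have hκS : κ ∈ S :=
    hS.mem_of_tendsto_of_le (fun μ => (hcS μ.2).1) hle (hκ univ 𝒜.isSetAlgebra.univ_mem)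
  have hκL : κ ≤ L := fun A hA => le_of_tendsto' (hκ A hA) fun μ => (hcS μ.2).2.2 A hA
  exact ⟨κ, ⟨hκS, (hcS hμ₀).2.1.trans (hle ⟨μ₀, hμ₀⟩), hκL⟩, fun ν hν => hle ⟨ν, hν⟩⟩

lemma exists_orthogonal_sub_of_nonneg (hS : IsBand S) {L : BAMeasure 𝒜} (hL : 0 ≤ L) :
    ∃ μ ∈ S, ∀ τ ∈ S, Orthogonal (L - μ) τ := by
  obtain ⟨μ, ⟨hμS, hμ, hμL⟩, hmax⟩ := hS.exists_maximal_le hL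
  refine ⟨μ, hμS, fun τ hτ => .of_inf_nonpos ?_⟩
  -- `μ + κ` still lies in `S` below `L`, so maximality of `μ` forces `κ` to vanish.
  set κ := variation (L - μ) ⊓ variation τ
  have hκ : 0 ≤ κ := inf_nonneg (variation_nonneg _) (variation_nonneg _)
  have hκS : κ ∈ S := hS.mem_of_nonneg_of_le hτ hκ (BAMeasure.inf_le_right _ _)
  have hκL : κ ≤ L - μ := (BAMeasure.inf_le_left _ _).trans fun A hA =>
    (var_of_nonneg (sub_nonneg.2 hμL) hA).le
  have hmem : μ + κ ∈ S ∧ 0 ≤ μ + κ ∧ μ + κ ≤ L :=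
    ⟨S.add_mem hμS hκS, add_nonneg hμ hκ, le_sub_iff_add_le'.1 hκL⟩
  exact (add_le_iff_nonpos_right μ).1 (hmax hmem (le_add_of_nonneg_right hκ))

theorem exists_orthogonal_sub (hS : IsBand S) (μ : BAMeasure 𝒜) :
    ∃ ν ∈ S, ∀ τ ∈ S, Orthogonal (μ - ν) τ := by
  have hpos : 0 ≤ variation μ - μ :=
    sub_nonneg.2 fun A hA => (le_abs_self _).trans (μ.abs_le_var hA)
  obtain ⟨ν₁, hν₁S, hν₁⟩ := hS.exists_orthogonal_sub_of_nonneg μ.variation_nonneg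
  obtain ⟨ν₂, hν₂S, hν₂⟩ := hS.exists_orthogonal_sub_of_nonneg hpos
  refine ⟨ν₁ - ν₂, S.sub_mem hν₁S hν₂S, fun τ hτ => ?_⟩
  have heq : μ - (ν₁ - ν₂) = (variation μ - ν₁) - (variation μ - μ - ν₂) := by abel
  rw [heq]
  exact (orthogonalTo τ).sub_mem (hν₁ τ hτ) (hν₂ τ hτ)

end IsBand

lemma eqOn_of_eqOn_add_of_orthogonal {S : Submodule ℝ (BAMeasure 𝒜)} {c c' d d' : BAMeasure 𝒜}
    (hc : c ∈ S) (hc' : c' ∈ S) (hd : ∀ τ ∈ S, Orthogonal d τ) (hd' : ∀ τ ∈ S, Orthogonal d' τ)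
    (h : EqOn (c + d).toFun (c' + d').toFun 𝒜.sets) : EqOn c c' 𝒜.sets := by
  have hsub : EqOn (c - c').toFun (d' - d).toFun 𝒜.sets := fun A hA => by
    have := h hA
    simp only [BAMeasure.add_apply, BAMeasure.sub_apply] at this ⊢
    linarith
  have habs : AbsCont (c - c') (d' - d) := .of_var_le fun A hA =>
    var_le_of_abs_le (ν := variation (d' - d))
      (fun B hB => (congrArg abs (hsub hB)).trans_le ((d' - d).abs_le_var hB)) hA
  have hcS : c - c' ∈ S := S.sub_mem hc hc'
  have horth : Orthogonal (d' - d) (c - c') :=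
    (orthogonalTo (c - c')).sub_mem (hd' _ hcS) (hd _ hcS)
  intro A hA
  have := (horth.of_absCont habs).eqOn_zero_of_self hA
  rwa [BAMeasure.sub_apply, Pi.zero_apply, sub_eq_zero] at this

/-- Finite partitions into sets of the algebra; `StronglyContinuous` spells this out for
`ι = Fin N`. -/
def IsPartition (𝒜 : SetAlg Ω) {ι : Type*} (A : ι → Set Ω) : Prop :=
  (∀ i, A i ∈ 𝒜.sets) ∧ Pairwise (Function.onFun Disjoint A) ∧ ⋃ i, A i = univ

namespace IsPartition

variable {ι κ : Type*} {A : ι → Set Ω} {B : κ → Set Ω}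

lemma comp_equiv (hA : IsPartition 𝒜 A) (e : κ ≃ ι) : IsPartition 𝒜 (A ∘ e) :=
  ⟨fun _ => hA.1 _, fun _ _ hij => hA.2.1 (e.injective.ne hij),
    (e.surjective.iUnion_comp A).trans hA.2.2⟩

lemma inter (hA : IsPartition 𝒜 A) (hB : IsPartition 𝒜 B) :
    IsPartition 𝒜 fun p : ι × κ => A p.1 ∩ B p.2 := by
  refine ⟨fun p => 𝒜.isSetAlgebra.inter_mem (hA.1 _) (hB.1 _), fun p q hpq => ?_, ?_⟩
  · rcases not_and_or.1 (mt Prod.ext_iff.2 hpq) with h | h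
    · exact (hA.2.1 h).mono inter_subset_left inter_subset_left
    · exact (hB.2.1 h).mono inter_subset_right inter_subset_right
  · simp only [iUnion_prod', ← inter_iUnion, ← iUnion_inter, hA.2.2, hB.2.2, univ_inter]

lemma sum_map [Fintype ι] (hA : IsPartition 𝒜 A) (μ : BAMeasure 𝒜) : ∑ i, μ (A i) = μ univ := by
  have h := MeasureTheory.addContent_iUnion (m := μ.toAddContent) hA.1 hA.2.1
    (hA.2.2 ▸ 𝒜.isSetAlgebra.univ_mem)
  rw [hA.2.2] at h
  exact h.symm

end IsPartition

namespace StronglyContinuous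

variable {μ ν : BAMeasure 𝒜}

lemma exists_isPartition (hμ : StronglyContinuous μ) {ε : ℝ} (hε : 0 < ε) :
    ∃ (N : ℕ) (A : Fin N → Set Ω), IsPartition 𝒜 A ∧ ∀ n, var μ (A n) < ε := by
  obtain ⟨N, A, hA, hdisj, hcover, hsmall⟩ := hμ ε hε
  exact ⟨N, A, ⟨hA, hdisj, hcover⟩, hsmall⟩

lemma of_exists_isPartition
    (h : ∀ ε > (0 : ℝ), ∃ (ι : Type) (_ : Fintype ι) (A : ι → Set Ω),
      IsPartition 𝒜 A ∧ ∀ i, var μ (A i) < ε) : StronglyContinuous μ := by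
  intro ε hε
  obtain ⟨ι, _, A, hA, hsmall⟩ := h ε hε
  obtain ⟨hmem, hdisj, hcover⟩ := hA.comp_equiv (Fintype.equivFin ι).symm
  exact ⟨_, _, hmem, hdisj, hcover, fun _ => hsmall _⟩

lemma zero : StronglyContinuous (0 : BAMeasure 𝒜) := by
  refine of_exists_isPartition fun ε hε => ⟨Unit, inferInstance, fun _ => univ,
    ⟨fun _ => 𝒜.isSetAlgebra.univ_mem, Subsingleton.pairwise, iUnion_const univ⟩, fun _ => ?_⟩
  rwa [var_of_nonneg le_rfl 𝒜.isSetAlgebra.univ_mem, zero_apply]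

lemma add (hμ : StronglyContinuous μ) (hν : StronglyContinuous ν) :
    StronglyContinuous (μ + ν) := by
  refine of_exists_isPartition fun ε hε => ?_
  obtain ⟨M, A, hA, hμA⟩ := hμ.exists_isPartition (half_pos hε)
  obtain ⟨N, B, hB, hνB⟩ := hν.exists_isPartition (half_pos hε)
  refine ⟨Fin M × Fin N, inferInstance, _, hA.inter hB, fun p => ?_⟩
  have hmem := (hA.inter hB).1 p
  linarith [var_add_le μ ν hmem, μ.var_mono hmem (hA.1 _) inter_subset_left,
    ν.var_mono hmem (hB.1 _) inter_subset_right, hμA p.1, hνB p.2]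

lemma of_absCont (hμ : StronglyContinuous μ) (h : AbsCont ν μ) : StronglyContinuous ν := by
  intro ε hε
  obtain ⟨δ, hδ, hνμ⟩ := h ε hε
  obtain ⟨N, A, hA, hdisj, hcover, hsmall⟩ := hμ δ hδ
  exact ⟨N, A, hA, hdisj, hcover, fun n => hνμ _ (hA n) (hsmall n)⟩

lemma of_approx (h : ∀ ε > (0 : ℝ), ∃ μ, StronglyContinuous μ ∧ var (ν - μ) univ < ε) :
    StronglyContinuous ν := by
  intro ε hε
  obtain ⟨μ, hμ, hνμ⟩ := h (ε / 2) (half_pos hε)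
  obtain ⟨N, A, hA, hdisj, hcover, hsmall⟩ := hμ (ε / 2) (half_pos hε)
  refine ⟨N, A, hA, hdisj, hcover, fun n => ?_⟩
  linarith [hsmall n, ν.var_le_var_add_var_sub μ (hA n),
    (ν - μ).var_mono (hA n) 𝒜.isSetAlgebra.univ_mem (subset_univ _)]

end StronglyContinuous

/-- The strongly continuous elements of `ba(𝒜)`. -/
def stronglyContinuousSubmodule (𝒜 : SetAlg Ω) : Submodule ℝ (BAMeasure 𝒜) where
  carrier := {μ | StronglyContinuous μ}
  add_mem' := StronglyContinuous.add
  zero_mem' := .zero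
  smul_mem' r μ hμ := hμ.of_absCont (absCont_smul r μ)

lemma isBand_stronglyContinuousSubmodule (𝒜 : SetAlg Ω) :
    IsBand (stronglyContinuousSubmodule 𝒜) where
  mem_of_absCont _ _ := StronglyContinuous.of_absCont
  mem_of_approx _ := StronglyContinuous.of_approx

section ZeroOne

variable {μ : BAMeasure 𝒜}

lemma nonneg_of_forall_eq_zero_or_one (h01 : ∀ A ∈ 𝒜.sets, μ A = 0 ∨ μ A = 1) : 0 ≤ μ := by
  intro A hA
  rcases h01 A hA with h | h <;> simp [h]

lemma var_univ_le_one (h01 : ∀ A ∈ 𝒜.sets, μ A = 0 ∨ μ A = 1) : var μ univ ≤ 1 := by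
  have huniv := 𝒜.isSetAlgebra.univ_mem
  rw [var_of_nonneg (nonneg_of_forall_eq_zero_or_one h01) huniv]
  rcases h01 univ huniv with h | h <;> simp [h]

lemma stronglyDiscontinuous_of_forall_eq_zero_or_one
    (h01 : ∀ A ∈ 𝒜.sets, μ A = 0 ∨ μ A = 1) : StronglyDiscontinuous μ := by
  intro τ hτ ε hε
  have hμ := nonneg_of_forall_eq_zero_or_one h01
  obtain ⟨N, A, hA, hsmall⟩ := hτ.exists_isPartition hε
  by_cases hcell : ∃ n, μ (A n) = 1
  · obtain ⟨n, hn⟩ := hcell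
    have hcompl := 𝒜.compl_mem (hA.1 n)
    refine ⟨(A n)ᶜ, hcompl, ?_, by rw [compl_compl]; exact hsmall n⟩
    rw [var_of_nonneg hμ hcompl, μ.map_compl (hA.1 n), hn,
      ← var_of_nonneg hμ 𝒜.isSetAlgebra.univ_mem]
    linarith [var_univ_le_one h01]
  · have hzero : ∀ n, μ (A n) = 0 := fun n =>
      (h01 _ (hA.1 n)).resolve_right (not_exists.1 hcell n)
    refine ⟨univ, 𝒜.isSetAlgebra.univ_mem, ?_, ?_⟩
    · rwa [var_of_nonneg hμ 𝒜.isSetAlgebra.univ_mem, ← hA.sum_map μ,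
        Finset.sum_eq_zero fun n _ => hzero n]
    · rwa [compl_univ, ← variation_apply, (variation τ).map_empty]

lemma stronglyDiscontinuous_of_hasSum {ι : Type*} {a : ι → ℝ} {μ : ι → BAMeasure 𝒜}
    {ν : BAMeasure 𝒜} (h01 : ∀ i, ∀ A ∈ 𝒜.sets, μ i A = 0 ∨ μ i A = 1)
    (ha : Summable fun i => |a i|) (hν : ∀ A ∈ 𝒜.sets, HasSum (fun i => a i * μ i A) (ν A)) :
    StronglyDiscontinuous ν := by
  intro τ hτ
  have huniv := 𝒜.isSetAlgebra.univ_mem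
  have hterm : ∀ i, a i • μ i ∈ orthogonalTo τ := fun i =>
    (orthogonalTo τ).smul_mem _ (stronglyDiscontinuous_of_forall_eq_zero_or_one (h01 i) τ hτ)
  have hnorm : ∀ i, var (a i • μ i) univ ≤ |a i| := fun i =>
    (var_smul_le (a i) (μ i) huniv).trans
      (mul_le_of_le_one_right (abs_nonneg _) (var_univ_le_one (h01 i)))
  exact (isBand_orthogonalTo τ).mem_of_hasSum hterm
    (.of_nonneg_of_le (fun i => (a i • μ i).var_nonneg huniv) hnorm ha) hν

end ZeroOne

/-- Lemma 8: each `λ ∈ ba(𝒜)` decomposes uniquely as `λ = λ_c + λ_d` with `λ_c` strongly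
continuous and `λ_d` strongly discontinuous; moreover `λ_c` coincides with the strongly
continuous part `λ₀` of any Sobczyk–Hammer decomposition `λ = λ₀ + Σ_n a_n λ_n`. -/
theorem stmt_5 {Ω : Type*} {𝒜 : SetAlg Ω} (lam : BAMeasure 𝒜) :
    ∃ lamc lamd : BAMeasure 𝒜,
      StronglyContinuous lamc ∧ StronglyDiscontinuous lamd ∧
      (∀ A ∈ 𝒜.sets, lam.toFun A = lamc.toFun A + lamd.toFun A) ∧
      (∀ c d : BAMeasure 𝒜, StronglyContinuous c → StronglyDiscontinuous d →
        (∀ A ∈ 𝒜.sets, lam.toFun A = c.toFun A + d.toFun A) →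
        ∀ A ∈ 𝒜.sets, c.toFun A = lamc.toFun A ∧ d.toFun A = lamd.toFun A) ∧
      (∀ (lam0 : BAMeasure 𝒜) (a : ℕ → ℝ) (lams : ℕ → BAMeasure 𝒜),
        StronglyContinuous lam0 →
        (∀ n, ∀ A ∈ 𝒜.sets, (lams n).toFun A = 0 ∨ (lams n).toFun A = 1) →
        (∀ i j, a i ≠ 0 → a j ≠ 0 → i ≠ j →
          ∃ A ∈ 𝒜.sets, (lams i).toFun A ≠ (lams j).toFun A) →
        Summable (fun n => |a n|) →
        (∀ A ∈ 𝒜.sets,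
          HasSum (fun n => a n * (lams n).toFun A) (lam.toFun A - lam0.toFun A)) →
        ∀ A ∈ 𝒜.sets, lam0.toFun A = lamc.toFun A) := by
  obtain ⟨ν, hν, horth⟩ := (isBand_stronglyContinuousSubmodule 𝒜).exists_orthogonal_sub lam
  have hunique : ∀ c d : BAMeasure 𝒜, StronglyContinuous c → StronglyDiscontinuous d →
      (∀ A ∈ 𝒜.sets, lam A = c A + d A) → EqOn c ν 𝒜.sets := fun c d hc hd hadd =>
    eqOn_of_eqOn_add_of_orthogonal (S := stronglyContinuousSubmodule 𝒜) hc hν hd horth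
      fun A hA => by rw [add_sub_cancel]; exact (hadd A hA).symm
  refine ⟨ν, lam - ν, hν, horth, fun A _ => ?_, fun c d hc hd hadd A hA => ?_, ?_⟩
  · rw [BAMeasure.sub_apply, add_sub_cancel]
  · have hcν := hunique c d hc hd hadd hA
    exact ⟨hcν, by rw [BAMeasure.sub_apply, hadd A hA, hcν, add_sub_cancel_left]⟩
  · intro lam0 a lams hlam0 h01 _ ha hsum
    have hdisc : StronglyDiscontinuous (lam - lam0) :=
      stronglyDiscontinuous_of_hasSum h01 ha fun A hA => by
        rw [BAMeasure.sub_apply]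
        exact hsum A hA
    exact hunique lam0 (lam - lam0) hlam0 hdisc fun A _ => by
      rw [BAMeasure.sub_apply, add_sub_cancel]

end FA
end

section
/- Let 𝒜 be a σ-algebra and λ countably additive and nonnegative. Let K⊆L⁰(λ)₊ be convex and bounded in L⁰(λ), C={f∈L⁰(λ)₊: f≤g for some g∈K}, and D=C∩L^∞(λ). Then for every μ∈𝔓_*(λ;K), the closure of D in the weak* topology of L^∞(λ) (as the dual of L¹(λ)) equals (closure of D in L¹(μ)) ∩ L^∞(λ). -/
open Set Filter Topology

namespace FA

variable {Ω : Type*} {𝒜 : SetAlg Ω}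

/-- The closure of `C` in `L⁰(λ)` (with respect to the metric `d`). -/
def cl0 (lam : BAMeasure 𝒜) (C : Set (Ω → ℝ)) : Set (Ω → ℝ) :=
  {f ∈ L0 lam | ∀ ε > (0:ℝ), ∃ g ∈ C, dL0 lam f g < ε}

/-- The closure of `C` in `L¹(μ)` (with respect to the seminorm `∫| · |d|μ|`). -/
def cl1 (mu : BAMeasure 𝒜) (C : Set (Ω → ℝ)) : Set (Ω → ℝ) :=
  {f | MemL1 mu f ∧ ∀ ε > (0:ℝ), ∃ g ∈ C, l1Norm mu (f - g) < ε}

/-- `L^∞(λ)`: the `λ`-essentially bounded elements of `L⁰(λ)`. -/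
def Linfty (lam : BAMeasure 𝒜) : Set (Ω → ℝ) :=
  {f ∈ L0 lam | ∃ M : ℝ, outer lam {ω | M < |f ω|} = 0}

/-- The closure of `D` in the weak* topology of `L^∞(λ)` as the dual of `L¹(λ)`. -/
def weakStarCl (lam : BAMeasure 𝒜) (D : Set (Ω → ℝ)) : Set (Ω → ℝ) :=
  {f ∈ Linfty lam | ∀ ε > (0:ℝ), ∀ (n : ℕ) (g : Fin n → Ω → ℝ),
    (∀ i, MemL1 lam (g i)) →
    ∃ h ∈ D, ∀ i, |integral lam (fun ω => (f ω - h ω) * g i ω)| < ε}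

open MeasureTheory

open scoped ENNReal

/-!
Represent `λ` and `μ` by finite measures `L` and `M` with the same null sets. For `u ∈ L²(M)` the
function `(dM/dL) u` belongs to `L¹(L)`, so an element of the weak* closure of `D` is approximated
by elements of `D` against each single `u ∈ L²(M)`. As `D` is convex, Hahn–Banach turns this into
approximation in the norm of `L²(M)`, hence in that of `L¹(M)`. Conversely, let `f ∈ L^∞(λ)` be an
`L¹(M)`-limit of elements of `D`. As `D` is solid, these may be truncated at a bound of `f`, and
dominated convergence along an almost everywhere convergent subsequence gives weak* approximation.
-/

theorem SetAlg.diff_mem {A B : Set Ω} (hA : A ∈ 𝒜.sets) (hB : B ∈ 𝒜.sets) : A \ B ∈ 𝒜.sets := by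
  simpa [Set.compl_union, Set.sdiff_eq] using 𝒜.compl_mem (𝒜.union_mem (𝒜.compl_mem hA) hB)

theorem SetAlg.biUnion_finset_mem {ι : Type*} {A : ι → Set Ω} (hA : ∀ i, A i ∈ 𝒜.sets)
    (s : Finset ι) : (⋃ i ∈ s, A i) ∈ 𝒜.sets := by
  classical
  induction s using Finset.induction_on with
  | empty => simpa using 𝒜.empty_mem
  | insert i s _ ih => simpa only [Finset.set_biUnion_insert] using 𝒜.union_mem (hA i) ih

theorem BAMeasure.map_diff (nu : BAMeasure 𝒜) {A B : Set Ω} (hA : A ∈ 𝒜.sets) (hB : B ∈ 𝒜.sets)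
    (hBA : B ⊆ A) : nu.toFun (A \ B) = nu.toFun A - nu.toFun B := by
  rw [eq_sub_iff_add_eq', ← nu.additive hB (SetAlg.diff_mem hA hB) disjoint_sdiff_self_right,
    Set.union_sdiff_cancel hBA]

theorem BAMeasure.map_biUnion_finset (nu : BAMeasure 𝒜) {ι : Type*} {A : ι → Set Ω}
    (hA : ∀ i, A i ∈ 𝒜.sets) (hdisj : Pairwise (Function.onFun Disjoint A)) (s : Finset ι) :
    nu.toFun (⋃ i ∈ s, A i) = ∑ i ∈ s, nu.toFun (A i) := by
  classical
  induction s using Finset.induction_on with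
  | empty => simp [nu.map_empty]
  | insert i s hi ih =>
    have hdisj_i : Disjoint (A i) (⋃ j ∈ s, A j) :=
      Set.disjoint_iUnion₂_right.2 fun j hj => hdisj (ne_of_mem_of_not_mem hj hi).symm
    rw [Finset.set_biUnion_insert, nu.additive (hA i) (SetAlg.biUnion_finset_mem hA s) hdisj_i,
      Finset.sum_insert hi, ih]

theorem var_eq_of_nonneg {nu : BAMeasure 𝒜} (hnu : ∀ A ∈ 𝒜.sets, 0 ≤ nu.toFun A) {A : Set Ω}
    (hA : A ∈ 𝒜.sets) : var nu A = nu.toFun A := by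
  have hpos : IsGreatest {x | ∃ B ∈ 𝒜.sets, B ⊆ A ∧ x = nu.toFun B} (nu.toFun A) := by
    refine ⟨⟨A, hA, subset_rfl, rfl⟩, ?_⟩
    rintro x ⟨B, hB, hBA, rfl⟩
    simpa [nu.map_diff hA hB hBA] using hnu _ (SetAlg.diff_mem hA hB)
  have hneg : IsGreatest {x | ∃ B ∈ 𝒜.sets, B ⊆ A ∧ x = -nu.toFun B} 0 := by
    refine ⟨⟨∅, 𝒜.empty_mem, Set.empty_subset _, by simp [nu.map_empty]⟩, ?_⟩
    rintro x ⟨B, hB, -, rfl⟩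
    simpa using hnu B hB
  rw [var, hpos.csSup_eq, hneg.csSup_eq, add_zero]

theorem absCont_of_var_le {lam mu : BAMeasure 𝒜} {c : ℝ} (hc : 0 ≤ c)
    (hle : ∀ A ∈ 𝒜.sets, var mu A ≤ c * var lam A) : AbsCont mu lam := by
  intro ε hε
  refine ⟨ε / (c + 1), by positivity, fun A hA hlt => (hle A hA).trans_lt ?_⟩
  calc c * var lam A ≤ c * (ε / (c + 1)) := by gcongr
    _ < (c + 1) * (ε / (c + 1)) := by gcongr; linarith
    _ = ε := by field_simp

theorem AbsCont.var_eq_zero {lam mu : BAMeasure 𝒜} (hac : AbsCont mu lam)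
    (hmu : ∀ A ∈ 𝒜.sets, 0 ≤ mu.toFun A) {A : Set Ω} (hA : A ∈ 𝒜.sets) (h0 : var lam A = 0) :
    var mu A = 0 := by
  refine le_antisymm (le_of_forall_gt fun ε hε => ?_) (var_eq_of_nonneg hmu hA ▸ hmu A hA)
  obtain ⟨δ, hδ, hsmall⟩ := hac ε hε
  exact hsmall A hA (h0 ▸ hδ)

theorem CountablyAdditive.of_absCont {lam mu : BAMeasure 𝒜} (hca : CountablyAdditive lam)
    (hlam : ∀ A ∈ 𝒜.sets, 0 ≤ lam.toFun A) (hmu : ∀ A ∈ 𝒜.sets, 0 ≤ mu.toFun A)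
    (hac : AbsCont mu lam) : CountablyAdditive mu := by
  intro A hA hdisj hU
  have hrest_mem (s : Finset ℕ) : (⋃ i, A i) \ ⋃ i ∈ s, A i ∈ 𝒜.sets :=
    SetAlg.diff_mem hU (SetAlg.biUnion_finset_mem hA s)
  have hrest (nu : BAMeasure 𝒜) (s : Finset ℕ) :
      nu.toFun ((⋃ i, A i) \ ⋃ i ∈ s, A i) = nu.toFun (⋃ i, A i) - ∑ i ∈ s, nu.toFun (A i) := by
    rw [nu.map_diff hU (SetAlg.biUnion_finset_mem hA s)
      (Set.iUnion₂_subset fun i _ => Set.subset_iUnion A i), nu.map_biUnion_finset hA hdisj]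
  refine Metric.tendsto_nhds.2 fun ε hε => ?_
  obtain ⟨δ, hδ, hsmall⟩ := hac ε hε
  filter_upwards [Metric.tendsto_nhds.1 (hca A hA hdisj hU) δ hδ] with s hs
  rw [Real.dist_eq, abs_sub_comm, ← hrest, abs_of_nonneg (hlam _ (hrest_mem s)),
    ← var_eq_of_nonneg hlam (hrest_mem s)] at hs
  rw [Real.dist_eq, abs_sub_comm, ← hrest, abs_of_nonneg (hmu _ (hrest_mem s)),
    ← var_eq_of_nonneg hmu (hrest_mem s)]
  exact hsmall _ (hrest_mem s) hs

section LpSpaces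

theorem mem_closure_of_forall_exists_abs_map_sub_lt {E : Type*} [NormedAddCommGroup E]
    [NormedSpace ℝ E] {s : Set E} (hs : Convex ℝ s) {x : E}
    (hx : ∀ φ : E →L[ℝ] ℝ, ∀ δ > 0, ∃ y ∈ s, |φ (x - y)| < δ) : x ∈ closure s := by
  by_contra hmem
  obtain ⟨φ, c, hφx, hφs⟩ :=
    geometric_hahn_banach_point_closed hs.closure isClosed_closure hmem
  obtain ⟨y, hy, hlt⟩ := hx φ (c - φ x) (sub_pos.2 hφx)
  rw [map_sub] at hlt
  linarith [hφs y (subset_closure hy), neg_abs_le (φ x - φ y)]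

variable [MeasurableSpace Ω] {μ : Measure Ω}

theorem convex_setOf_exists_ae_eq {E : Type*} [NormedAddCommGroup E] [NormedSpace ℝ E]
    {p : ℝ≥0∞} {D : Set (Ω → E)} (hD : Convex ℝ D) :
    Convex ℝ {y : Lp E p μ | ∃ h ∈ D, y =ᵐ[μ] h} := by
  rintro x ⟨h, hh, hx⟩ y ⟨k, hk, hy⟩ a b ha hb hab
  refine ⟨a • h + b • k, hD hh hk ha hb hab, (Lp.coeFn_add _ _).trans ?_⟩
  exact ((Lp.coeFn_smul a x).trans (hx.const_smul a)).add
    ((Lp.coeFn_smul b y).trans (hy.const_smul b))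

theorem exists_memLp_two_forall_apply_toLp_eq_integral (φ : Lp ℝ 2 μ →L[ℝ] ℝ) :
    ∃ u, MemLp u 2 μ ∧ ∀ v (hv : MemLp v 2 μ), φ (hv.toLp v) = ∫ x, v x * u x ∂μ := by
  obtain ⟨u, rfl⟩ := (InnerProductSpace.toDual ℝ (Lp ℝ 2 μ)).surjective φ
  refine ⟨u, Lp.memLp u, fun v hv => ?_⟩
  rw [InnerProductSpace.toDual_apply_apply, L2.inner_def]
  refine integral_congr_ae ?_
  filter_upwards [hv.coeFn_toLp] with x hx
  rw [hx, RCLike.inner_apply, conj_trivial]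

theorem exists_eLpNorm_two_sub_lt_of_weak {D : Set (Ω → ℝ)} (hD : Convex ℝ D)
    (hD2 : ∀ h ∈ D, MemLp h 2 μ) {f : Ω → ℝ} (hf : MemLp f 2 μ)
    (hweak : ∀ u, MemLp u 2 μ → ∀ δ > 0, ∃ h ∈ D, |∫ x, (f x - h x) * u x ∂μ| < δ)
    {ε : ℝ≥0∞} (hε : 0 < ε) : ∃ h ∈ D, eLpNorm (f - h) 2 μ < ε := by
  have hmem : hf.toLp f ∈ closure {y : Lp ℝ 2 μ | ∃ h ∈ D, y =ᵐ[μ] h} := by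
    have hconv : Convex ℝ {y : Lp ℝ 2 μ | ∃ h ∈ D, y =ᵐ[μ] h} := convex_setOf_exists_ae_eq hD
    refine mem_closure_of_forall_exists_abs_map_sub_lt hconv fun φ δ hδ => ?_
    obtain ⟨u, hu, hφ⟩ := exists_memLp_two_forall_apply_toLp_eq_integral φ
    obtain ⟨h, hh, hlt⟩ := hweak u hu δ hδ
    refine ⟨(hD2 h hh).toLp h, ⟨h, hh, (hD2 h hh).coeFn_toLp⟩, ?_⟩
    rwa [← MemLp.toLp_sub, hφ]
  obtain ⟨y, ⟨h, hh, hy⟩, hlt⟩ := EMetric.mem_closure_iff.1 hmem ε hε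
  refine ⟨h, hh, ?_⟩
  rwa [Lp.edist_def, eLpNorm_congr_ae (hf.coeFn_toLp.sub hy)] at hlt

theorem exists_eLpNorm_one_sub_lt_of_weak [IsFiniteMeasure μ] {D : Set (Ω → ℝ)}
    (hD : Convex ℝ D) (hD2 : ∀ h ∈ D, MemLp h 2 μ) {f : Ω → ℝ} (hf : MemLp f 2 μ)
    (hweak : ∀ u, MemLp u 2 μ → ∀ δ > 0, ∃ h ∈ D, |∫ x, (f x - h x) * u x ∂μ| < δ)
    {ε : ℝ≥0∞} (hε : 0 < ε) : ∃ h ∈ D, eLpNorm (f - h) 1 μ < ε := by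
  have hc : μ univ ^ (1 / (1 : ℝ≥0∞).toReal - 1 / (2 : ℝ≥0∞).toReal) ≠ ∞ :=
    ENNReal.rpow_ne_top_of_nonneg (by norm_num) (measure_ne_top μ univ)
  obtain ⟨δ, hδ, hδε⟩ := ENNReal.exists_pos_mul_lt hc hε.ne'
  obtain ⟨h, hh, hlt⟩ := exists_eLpNorm_two_sub_lt_of_weak hD hD2 hf hweak hδ
  refine ⟨h, hh, lt_of_le_of_lt ?_ hδε⟩
  refine (eLpNorm_le_eLpNorm_mul_rpow_measure_univ one_le_two
    (hf.sub (hD2 h hh)).aestronglyMeasurable).trans ?_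
  gcongr

theorem exists_seq_tendsto_ae_of_forall_exists_eLpNorm_sub_lt {p : ℝ≥0∞} (hp : p ≠ 0)
    {D : Set (Ω → ℝ)} (hDm : ∀ h ∈ D, AEStronglyMeasurable h μ) (hD0 : ∀ h ∈ D, 0 ≤ h)
    {B : ℝ} (hB : 0 ≤ B) (hDB : ∀ h ∈ D, (fun x => min (h x) B) ∈ D)
    {f : Ω → ℝ} (hfm : AEStronglyMeasurable f μ) (hfB : ∀ᵐ x ∂μ, |f x| ≤ B)
    (hcl : ∀ ε > (0 : ℝ), ∃ h ∈ D, eLpNorm (f - h) p μ < ENNReal.ofReal ε) :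
    ∃ k : ℕ → Ω → ℝ, (∀ n, k n ∈ D) ∧ (∀ n x, |k n x| ≤ B) ∧
      ∀ᵐ x ∂μ, Tendsto (fun n => k n x) atTop (𝓝 (f x)) := by
  obtain ⟨r, -, hr, hr0⟩ := exists_seq_strictAnti_tendsto (0 : ℝ)
  choose h hhD hh using fun n => hcl (r n) (hr n)
  let k : ℕ → Ω → ℝ := fun n x => min (h n x) B
  have hkf (n : ℕ) : eLpNorm (k n - f) p μ ≤ ENNReal.ofReal (r n) := by
    refine le_trans ?_ (hh n).le
    rw [eLpNorm_sub_comm]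
    refine eLpNorm_mono_ae ?_
    filter_upwards [hfB] with x hx
    have := abs_min_sub_min_le_max (f x) B (h n x) B
    rwa [min_eq_left (abs_le.1 hx).2, sub_self, abs_zero, max_eq_left (abs_nonneg _)] at this
  have hlim : Tendsto (fun n => eLpNorm (k n - f) p μ) atTop (𝓝 0) :=
    tendsto_of_tendsto_of_tendsto_of_le_of_le tendsto_const_nhds
      (by simpa using ENNReal.tendsto_ofReal hr0) (fun _ => zero_le) hkf
  obtain ⟨ns, -, hns⟩ := (tendstoInMeasure_of_tendsto_eLpNorm hp
    (fun n => hDm _ (hDB _ (hhD n))) hfm hlim).exists_seq_tendsto_ae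
  refine ⟨fun n => k (ns n), fun n => hDB _ (hhD _), fun n x => ?_, hns⟩
  rw [abs_of_nonneg (le_min (hD0 _ (hhD _) x) hB)]
  exact min_le_right _ _

theorem tendsto_integral_sub_mul_of_bounded {k : ℕ → Ω → ℝ} {f g : Ω → ℝ} {B : ℝ}
    (hkm : ∀ n, AEStronglyMeasurable (k n) μ) (hkB : ∀ n x, |k n x| ≤ B)
    (hlim : ∀ᵐ x ∂μ, Tendsto (fun n => k n x) atTop (𝓝 (f x))) (hg : Integrable g μ) :
    Tendsto (fun n => ∫ x, (f x - k n x) * g x ∂μ) atTop (𝓝 0) := by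
  have hfm : AEStronglyMeasurable f μ := aestronglyMeasurable_of_tendsto_ae atTop hkm hlim
  rw [← integral_zero Ω ℝ (μ := μ)]
  refine tendsto_integral_of_dominated_convergence (fun x => 2 * B * |g x|)
    (fun n => (hfm.sub (hkm n)).mul hg.aestronglyMeasurable) (hg.abs.const_mul _)
    (fun n => ?_) ?_
  · filter_upwards [hlim] with x hx
    have hfx : |f x| ≤ B := le_of_tendsto' hx.abs fun n => hkB n x
    rw [Real.norm_eq_abs, abs_mul]
    gcongr
    linarith [abs_sub (f x) (k n x), hkB n x]
  · filter_upwards [hlim] with x hx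
    simpa using (hx.const_sub (f x)).mul_const (g x)

theorem exists_tendsto_toL1_of_cauchySeq {E : Type*} [NormedAddCommGroup E] [CompleteSpace E]
    {F : ℕ → Ω → E} {f : Ω → E} (hF : ∀ n, Integrable (F n) μ)
    (hcau : CauchySeq fun n => (hF n).toL1 (F n)) (hlim : TendstoInMeasure μ F atTop f) :
    ∃ hf : Integrable f μ, Tendsto (fun n => (hF n).toL1 (F n)) atTop (𝓝 (hf.toL1 f)) := by
  obtain ⟨G, hG⟩ := cauchySeq_tendsto_of_complete hcau
  have hFG : TendstoInMeasure μ F atTop G :=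
    (tendstoInMeasure_of_tendsto_Lp hG).congr_left fun n => (hF n).coeFn_toL1
  have hGf : G =ᵐ[μ] f := tendstoInMeasure_ae_unique hFG hlim
  have hf : Integrable f μ := (L1.integrable_coeFn G).congr hGf
  refine ⟨hf, ?_⟩
  rwa [← (Integrable.toL1_eq_toL1_iff _ _ (L1.integrable_coeFn G) hf).2 hGf,
    Integrable.toL1_coeFn]

theorem memLp_top_of_absolutelyContinuous {E : Type*} [NormedAddCommGroup E] {ν : Measure Ω}
    {f : Ω → E} (hf : MemLp f ∞ μ) (hν : ν ≪ μ) : MemLp f ∞ ν :=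
  memLp_top_of_bound (hf.1.mono_ac hν) (lpNorm f ∞ μ) (hν.ae_le (ae_le_lpNorm_exponent_top hf))

theorem exists_simpleFunc_tendsto_toL1 [IsFiniteMeasure μ] {E : Type*} [NormedAddCommGroup E]
    {f : Ω → E} (hf : Integrable f μ) :
    ∃ F : ℕ → SimpleFunc Ω E, Tendsto
      (fun n => (SimpleFunc.integrable_of_isFiniteMeasure (μ := μ) (F n)).toL1 (F n))
      atTop (𝓝 (hf.toL1 f)) := by
  have hf1 : MemLp f 1 μ := memLp_one_iff_integrable.2 hf
  obtain ⟨r, -, hr, hr0⟩ := exists_seq_strictAnti_tendsto' (zero_lt_one' ℝ≥0∞)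
  choose F hF hFm using fun n =>
    hf1.exists_simpleFunc_eLpNorm_sub_lt ENNReal.one_ne_top (hr n).1.ne'
  refine ⟨F, (Lp.tendsto_Lp_iff_tendsto_eLpNorm'' (fun n => ⇑(F n)) hFm f hf1).2 ?_⟩
  refine tendsto_of_tendsto_of_tendsto_of_le_of_le tendsto_const_nhds hr0 (fun _ => zero_le)
    fun n => ?_
  rw [eLpNorm_sub_comm]
  exact (hF n).le

end LpSpaces

/-- The nonnegative functions in `L^∞(λ)` that lie below an element of `K`: the set
`D = C ∩ L^∞(λ)` of the theorem. -/
def boundedMinorants (lam : BAMeasure 𝒜) (K : Set (Ω → ℝ)) : Set (Ω → ℝ) :=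
  {f ∈ L0pos lam | ∃ g ∈ K, ∀ ω, f ω ≤ g ω} ∩ Linfty lam

/-- The measure `N` restricts to the set function `nu` on `𝒜`, and `𝒜` is the σ-algebra of
measurable sets. It transfers the notions defined from `nu` to Mathlib's integration theory;
being a predicate, it lets two set functions on `𝒜` share one `MeasurableSpace` instance. -/
structure Represents [MeasurableSpace Ω] (N : Measure Ω) (nu : BAMeasure 𝒜) : Prop where
  measurableSet_iff : ∀ A : Set Ω, MeasurableSet A ↔ A ∈ 𝒜.sets
  apply_eq : ∀ A ∈ 𝒜.sets, nu.toFun A = N.real A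

/-- A σ-algebra, viewed as a measurable space. -/
abbrev SetAlg.toMeasurableSpace (𝒜 : SetAlg Ω) (hσ : IsSigmaAlg 𝒜) : MeasurableSpace Ω where
  MeasurableSet' A := A ∈ 𝒜.sets
  measurableSet_empty := 𝒜.empty_mem
  measurableSet_compl _ hA := 𝒜.compl_mem hA
  measurableSet_iUnion A hA := hσ A hA

theorem exists_represents [MeasurableSpace Ω] (hm : ∀ A : Set Ω, MeasurableSet A ↔ A ∈ 𝒜.sets)
    {nu : BAMeasure 𝒜} (hca : CountablyAdditive nu) (hnu : ∀ A ∈ 𝒜.sets, 0 ≤ nu.toFun A) :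
    ∃ N : Measure Ω, IsFiniteMeasure N ∧ Represents N nu := by
  let N : Measure Ω := Measure.ofMeasurable (fun A _ => ENNReal.ofReal (nu.toFun A))
    (by simp [nu.map_empty]) fun A hA hdisj => by
      have hmem (n : ℕ) : A n ∈ 𝒜.sets := (hm _).1 (hA n)
      have hsum := hca A hmem hdisj ((hm _).1 (.iUnion hA))
      rw [← hsum.tsum_eq, ENNReal.ofReal_tsum_of_nonneg (fun n => hnu _ (hmem n)) hsum.summable]
  have hN (A : Set Ω) (hA : A ∈ 𝒜.sets) : N A = ENNReal.ofReal (nu.toFun A) :=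
    Measure.ofMeasurable_apply A ((hm A).2 hA)
  refine ⟨N, ⟨?_⟩, hm, fun A hA => ?_⟩
  · rw [hN _ ((hm _).1 .univ)]
    exact ENNReal.ofReal_lt_top
  · rw [measureReal_def, hN A hA, ENNReal.toReal_ofReal (hnu A hA)]

namespace Represents

variable [MeasurableSpace Ω] {nu : BAMeasure 𝒜} {N : Measure Ω}

theorem var_eq (hN : Represents N nu) {A : Set Ω} (hA : A ∈ 𝒜.sets) : var nu A = N.real A := by
  rw [var_eq_of_nonneg (fun B hB => hN.apply_eq B hB ▸ measureReal_nonneg) hA, hN.apply_eq A hA]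

theorem isSimple_iff (hN : Represents N nu) {f : Ω → ℝ} :
    IsSimple 𝒜 f ↔ ∃ F : SimpleFunc Ω ℝ, ⇑F = f := by
  constructor
  · rintro ⟨hfin, hmeas⟩
    exact ⟨⟨f, fun r => (hN.measurableSet_iff _).2 (hmeas r), hfin⟩, rfl⟩
  · rintro ⟨F, rfl⟩
    exact ⟨F.finite_range, fun r => (hN.measurableSet_iff _).1 (F.measurableSet_fiber r)⟩

variable [IsFiniteMeasure N]

theorem absolutelyContinuous {L : Measure Ω} [IsFiniteMeasure L] {lam : BAMeasure 𝒜}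
    (hN : Represents N nu) (hL : Represents L lam)
    (hnull : ∀ A ∈ 𝒜.sets, var lam A = 0 → var nu A = 0) : N ≪ L := by
  refine Measure.AbsolutelyContinuous.mk fun A hA hLA => ?_
  have hmem := (hL.measurableSet_iff A).1 hA
  rw [← measureReal_eq_zero_iff, ← hL.var_eq hmem] at hLA
  rw [← measureReal_eq_zero_iff, ← hN.var_eq hmem]
  exact hnull A hmem hLA

theorem outer_eq (hN : Represents N nu) (B : Set Ω) : outer nu B = N.real B := by
  have hmem := (hN.measurableSet_iff _).1 (measurableSet_toMeasurable N B)
  refine IsLeast.csInf_eq ⟨⟨toMeasurable N B, hmem, subset_toMeasurable N B, ?_⟩, ?_⟩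
  · rw [hN.var_eq hmem, measureReal_def, measureReal_def, measure_toMeasurable]
  · rintro x ⟨A, hA, hBA, rfl⟩
    rw [hN.var_eq hA]
    exact measureReal_mono hBA

theorem lConv_iff (hN : Represents N nu) {s : ℕ → Ω → ℝ} {f : Ω → ℝ} :
    LConv nu s f ↔ TendstoInMeasure N s atTop f := by
  simp only [tendstoInMeasure_iff_measureReal_dist, LConv, hN.outer_eq, Real.dist_eq]
  constructor
  · intro hlim c hc
    refine squeeze_zero (fun _ => measureReal_nonneg) (fun n => ?_) (hlim (c / 2) (half_pos hc))
    exact measureReal_mono fun x (hx : c ≤ _) => (half_lt_self hc).trans_le hx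
  · intro hlim c hc
    refine squeeze_zero (fun _ => measureReal_nonneg) (fun n => ?_) (hlim c hc)
    exact measureReal_mono fun x (hx : c < _) => hx.le

theorem mem_L0_iff (hN : Represents N nu) {f : Ω → ℝ} : f ∈ L0 nu ↔ AEStronglyMeasurable f N := by
  constructor
  · rintro ⟨s, hs, hlim⟩
    choose F hF using fun n => hN.isSimple_iff.1 (hs n)
    obtain rfl : (fun n => ⇑(F n)) = s := funext hF
    exact (hN.lConv_iff.1 hlim).aestronglyMeasurable fun n => (F n).aestronglyMeasurable
  · intro hf
    let F := hf.stronglyMeasurable_mk.approx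
    have hF : TendstoInMeasure N (fun n => ⇑(F n)) atTop (hf.mk f) :=
      tendstoInMeasure_of_tendsto_ae (fun n => (F n).aestronglyMeasurable)
        (.of_forall hf.stronglyMeasurable_mk.tendsto_approx)
    exact ⟨fun n => F n, fun n => hN.isSimple_iff.2 ⟨F n, rfl⟩,
      hN.lConv_iff.2 (hF.congr_right hf.ae_eq_mk.symm)⟩

theorem mem_Linfty_iff (hN : Represents N nu) {f : Ω → ℝ} : f ∈ Linfty nu ↔ MemLp f ∞ N := by
  have houter (M : ℝ) : outer nu {ω | M < |f ω|} = 0 ↔ ∀ᵐ x ∂N, ‖f x‖ ≤ M := by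
    rw [hN.outer_eq, measureReal_eq_zero_iff, ae_iff]
    simp only [not_le, Real.norm_eq_abs]
  simp only [Linfty, Set.mem_ofPred_eq, hN.mem_L0_iff, houter]
  constructor
  · rintro ⟨hf, M, hM⟩
    exact memLp_top_of_bound hf M hM
  · intro hf
    exact ⟨hf.1, lpNorm f ∞ N, ae_le_lpNorm_exponent_top hf⟩

theorem simpleIntegral_eq (hN : Represents N nu) {m : Set Ω → ℝ}
    (hm : ∀ A ∈ 𝒜.sets, m A = N.real A) (F : SimpleFunc Ω ℝ) :
    simpleIntegral m F = ∫ x, F x ∂N := by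
  have hfiber (r : ℝ) : m (F ⁻¹' {r}) = N.real (F ⁻¹' {r}) :=
    hm _ ((hN.measurableSet_iff _).1 (F.measurableSet_fiber r))
  have hsupp : Function.support (fun r => r * m (F ⁻¹' {r})) ⊆ F.range := by
    intro r hr
    contrapose! hr
    have hempty : F ⁻¹' {r} = ∅ := (SimpleFunc.preimage_eq_empty_iff F r).2 hr
    simp [hfiber, hempty]
  rw [simpleIntegral, finsum_eq_sum_of_support_subset _ hsupp,
    SimpleFunc.integral_eq_sum F (SimpleFunc.integrable_of_isFiniteMeasure F)]
  exact Finset.sum_congr rfl fun r _ => by rw [hfiber, smul_eq_mul, mul_comm]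

theorem simpleIntegral_var_abs_eq (hN : Represents N nu) (F : SimpleFunc Ω ℝ) :
    simpleIntegral (var nu) (fun ω => |F ω|) =
      ‖(SimpleFunc.integrable_of_isFiniteMeasure (μ := N) F).toL1 F‖ := by
  rw [L1.norm_of_fun_eq_integral_norm]
  exact hN.simpleIntegral_eq (fun A hA => hN.var_eq hA) (F.map abs)

theorem cauchy_in_mean_iff (hN : Represents N nu) (F : ℕ → SimpleFunc Ω ℝ) :
    (∀ ε > (0 : ℝ), ∃ n₀ : ℕ, ∀ m ≥ n₀, ∀ n ≥ n₀,
      simpleIntegral (var nu) (fun ω => |F m ω - F n ω|) < ε) ↔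
      CauchySeq fun n => (SimpleFunc.integrable_of_isFiniteMeasure (μ := N) (F n)).toL1 (F n) := by
  have hdist (m n : ℕ) : simpleIntegral (var nu) (fun ω => |F m ω - F n ω|) =
      dist ((SimpleFunc.integrable_of_isFiniteMeasure (μ := N) (F m)).toL1 (F m))
        ((SimpleFunc.integrable_of_isFiniteMeasure (μ := N) (F n)).toL1 (F n)) := by
    rw [dist_eq_norm, ← Integrable.toL1_sub]
    exact hN.simpleIntegral_var_abs_eq (F m - F n)
  simp only [Metric.cauchySeq_iff, hdist]

theorem exists_tendsto_toL1 (hN : Represents N nu) {s : ℕ → Ω → ℝ} {f : Ω → ℝ}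
    (hs : ∀ n, IsSimple 𝒜 (s n)) (hlim : LConv nu s f)
    (hcau : ∀ ε > (0 : ℝ), ∃ n₀ : ℕ, ∀ m ≥ n₀, ∀ n ≥ n₀,
      simpleIntegral (var nu) (fun ω => |s m ω - s n ω|) < ε) :
    ∃ (hf : Integrable f N) (F : ℕ → SimpleFunc Ω ℝ), (∀ n, ⇑(F n) = s n) ∧
      Tendsto (fun n => (SimpleFunc.integrable_of_isFiniteMeasure (μ := N) (F n)).toL1 (F n))
        atTop (𝓝 (hf.toL1 f)) := by
  choose F hF using fun n => hN.isSimple_iff.1 (hs n)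
  obtain rfl : (fun n => ⇑(F n)) = s := funext hF
  obtain ⟨hf, hFf⟩ := exists_tendsto_toL1_of_cauchySeq
    (fun n => SimpleFunc.integrable_of_isFiniteMeasure (F n)) ((hN.cauchy_in_mean_iff F).1 hcau)
    (hN.lConv_iff.1 hlim)
  exact ⟨hf, F, hF, hFf⟩

theorem memL1_iff (hN : Represents N nu) {f : Ω → ℝ} : MemL1 nu f ↔ Integrable f N := by
  constructor
  · rintro ⟨s, hs, hlim, hcau⟩
    exact (hN.exists_tendsto_toL1 hs hlim hcau).choose
  · intro hf
    obtain ⟨F, hFf⟩ := exists_simpleFunc_tendsto_toL1 hf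
    have hlim : TendstoInMeasure N (fun n => ⇑(F n)) atTop f :=
      ((tendstoInMeasure_of_tendsto_Lp hFf).congr_left fun n => Integrable.coeFn_toL1 _).congr_right
        hf.coeFn_toL1
    exact ⟨fun n => F n, fun n => hN.isSimple_iff.2 ⟨F n, rfl⟩, hN.lConv_iff.2 hlim,
      (hN.cauchy_in_mean_iff F).2 hFf.cauchySeq⟩

theorem integral_eq (hN : Represents N nu) {f : Ω → ℝ} (hf : Integrable f N) :
    integral nu f = ∫ x, f x ∂N := by
  have hmem : MemL1 nu f := hN.memL1_iff.2 hf
  obtain ⟨hs, hlim, hcau⟩ := hmem.choose_spec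
  obtain ⟨_, F, hF, hFf⟩ := hN.exists_tendsto_toL1 hs hlim hcau
  rw [integral, dif_pos hmem]
  simp only [← hF, hN.simpleIntegral_eq hN.apply_eq]
  refine Tendsto.limUnder_eq ?_
  simpa only [Function.comp_def, MeasureTheory.integral_eq _ hf,
    MeasureTheory.integral_eq _ (SimpleFunc.integrable_of_isFiniteMeasure (F _))]
    using (L1.continuous_integral.tendsto _).comp hFf

theorem l1Norm_eq (hN : Represents N nu) {f : Ω → ℝ} (hf : Integrable f N) :
    l1Norm nu f = (eLpNorm f 1 N).toReal := by
  have hmem : MemL1 nu f := hN.memL1_iff.2 hf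
  obtain ⟨hs, hlim, hcau⟩ := hmem.choose_spec
  obtain ⟨_, F, hF, hFf⟩ := hN.exists_tendsto_toL1 hs hlim hcau
  rw [l1Norm, dif_pos hmem, ← Lp.norm_toLp f (memLp_one_iff_integrable.2 hf)]
  simp only [← hF, hN.simpleIntegral_var_abs_eq]
  exact hFf.norm.limUnder_eq

theorem mem_cl1_iff (hN : Represents N nu) {D : Set (Ω → ℝ)} (hD : ∀ h ∈ D, Integrable h N)
    {f : Ω → ℝ} : f ∈ cl1 nu D ↔
      Integrable f N ∧ ∀ ε > (0 : ℝ), ∃ h ∈ D, eLpNorm (f - h) 1 N < ENNReal.ofReal ε := by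
  simp only [cl1, Set.mem_ofPred_eq, hN.memL1_iff]
  refine and_congr_right fun hf => forall₂_congr fun ε _ => exists_congr fun h =>
    and_congr_right fun hh => ?_
  have hfh : Integrable (f - h) N := hf.sub (hD h hh)
  rw [hN.l1Norm_eq hfh, ENNReal.lt_ofReal_iff_toReal_lt
    (memLp_one_iff_integrable.2 hfh).eLpNorm_ne_top]

theorem convex_boundedMinorants (hN : Represents N nu) {K : Set (Ω → ℝ)} (hK : Convex ℝ K) :
    Convex ℝ (boundedMinorants nu K) := by
  rintro f ⟨⟨⟨-, hf0⟩, g, hg, hfg⟩, hf⟩ f' ⟨⟨⟨-, hf0'⟩, g', hg', hfg'⟩, hf'⟩ a b ha hb hab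
  have hmem : a • f + b • f' ∈ Linfty nu := hN.mem_Linfty_iff.2
    (((hN.mem_Linfty_iff.1 hf).const_smul a).add ((hN.mem_Linfty_iff.1 hf').const_smul b))
  refine ⟨⟨⟨hmem.1, fun ω => ?_⟩, a • g + b • g', hK hg hg' ha hb hab, fun ω => ?_⟩, hmem⟩
  · exact add_nonneg (mul_nonneg ha (hf0 ω)) (mul_nonneg hb (hf0' ω))
  · exact add_le_add (mul_le_mul_of_nonneg_left (hfg ω) ha)
      (mul_le_mul_of_nonneg_left (hfg' ω) hb)

theorem min_mem_boundedMinorants (hN : Represents N nu) {K : Set (Ω → ℝ)} {h : Ω → ℝ}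
    (hh : h ∈ boundedMinorants nu K) {B : ℝ} (hB : 0 ≤ B) :
    (fun ω => min (h ω) B) ∈ boundedMinorants nu K := by
  obtain ⟨⟨⟨-, hh0⟩, g, hg, hhg⟩, hh_mem⟩ := hh
  have hmem : (fun ω => min (h ω) B) ∈ Linfty nu :=
    hN.mem_Linfty_iff.2 ((hN.mem_Linfty_iff.1 hh_mem).inf (memLp_top_const B))
  exact ⟨⟨⟨hmem.1, fun ω => le_min (hh0 ω) hB⟩, g, hg,
    fun ω => (min_le_left _ _).trans (hhg ω)⟩, hmem⟩

variable {L : Measure Ω} [IsFiniteMeasure L] {lam : BAMeasure 𝒜} {D : Set (Ω → ℝ)}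

theorem weakStarCl_subset_cl1 (hL : Represents L lam) (hN : Represents N nu) (hNL : N ≪ L)
    (hD : Convex ℝ D) (hDL : D ⊆ Linfty lam) : weakStarCl lam D ⊆ cl1 nu D := by
  rintro f ⟨hf, hweak⟩
  have hmemLp (h : Ω → ℝ) (hh : h ∈ Linfty lam) (p : ℝ≥0∞) : MemLp h p N :=
    (memLp_top_of_absolutelyContinuous (hL.mem_Linfty_iff.1 hh) hNL).mono_exponent le_top
  rw [hN.mem_cl1_iff fun h hh => memLp_one_iff_integrable.1 (hmemLp h (hDL hh) 1)]
  refine ⟨memLp_one_iff_integrable.1 (hmemLp f hf 1), fun ε hε =>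
    exists_eLpNorm_one_sub_lt_of_weak hD (fun h hh => hmemLp h (hDL hh) 2) (hmemLp f hf 2)
      (fun u hu δ hδ => ?_) (ENNReal.ofReal_pos.2 hε)⟩
  have hg : Integrable (fun x => (N.rnDeriv L x).toReal • u x) L :=
    (integrable_rnDeriv_smul_iff hNL).2 (hu.integrable one_le_two)
  obtain ⟨h, hh, hlt⟩ := hweak δ hδ 1 (fun _ => _) fun _ => hL.memL1_iff.2 hg
  refine ⟨h, hh, ?_⟩
  have hprod : Integrable (fun x => (f x - h x) * ((N.rnDeriv L x).toReal • u x)) L :=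
    ((hL.mem_Linfty_iff.1 hf).sub (hL.mem_Linfty_iff.1 (hDL hh))).integrable_mul
      (memLp_one_iff_integrable.2 hg)
  have hchange : ∫ x, (f x - h x) * u x ∂N =
      ∫ x, (f x - h x) * ((N.rnDeriv L x).toReal • u x) ∂L := by
    simp only [← integral_rnDeriv_smul hNL, mul_smul_comm]
  rw [hchange, ← hL.integral_eq hprod]
  exact hlt 0

theorem cl1_inter_Linfty_subset_weakStarCl (hL : Represents L lam) (hN : Represents N nu)
    (hNL : N ≪ L) (hLN : L ≪ N) (hDL : D ⊆ Linfty lam) (hD0 : ∀ h ∈ D, 0 ≤ h)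
    (hDB : ∀ h ∈ D, ∀ B : ℝ, 0 ≤ B → (fun x => min (h x) B) ∈ D) :
    cl1 nu D ∩ Linfty lam ⊆ weakStarCl lam D := by
  rintro f ⟨hcl, hf⟩
  refine ⟨hf, fun ε hε n g hg => ?_⟩
  have hDN (h : Ω → ℝ) (hh : h ∈ D) : MemLp h ∞ N :=
    memLp_top_of_absolutelyContinuous (hL.mem_Linfty_iff.1 (hDL hh)) hNL
  obtain ⟨hfN, hcl⟩ := (hN.mem_cl1_iff fun h hh => (hDN h hh).integrable le_top).1 hcl
  obtain ⟨k, hkD, hkB, hlim⟩ := exists_seq_tendsto_ae_of_forall_exists_eLpNorm_sub_lt one_ne_zero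
    (fun h hh => (hDN h hh).1) hD0 lpNorm_nonneg (fun h hh => hDB h hh _ lpNorm_nonneg) hfN.1
    (hNL.ae_le (ae_le_lpNorm_exponent_top (hL.mem_Linfty_iff.1 hf))) hcl
  have hkL (j : ℕ) : MemLp (k j) ∞ L := hL.mem_Linfty_iff.1 (hDL (hkD j))
  have hgL (i : Fin n) : Integrable (g i) L := hL.memL1_iff.1 (hg i)
  have hsmall : ∀ᶠ j in atTop, ∀ i, |∫ x, (f x - k j x) * g i x ∂L| < ε := by
    refine eventually_all.2 fun i => ?_
    have := (tendsto_integral_sub_mul_of_bounded (fun j => (hkL j).1) hkB (hLN.ae_le hlim)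
      (hgL i)).abs
    rw [abs_zero] at this
    exact this.eventually_lt_const hε
  obtain ⟨j, hj⟩ := hsmall.exists
  refine ⟨k j, hkD j, fun i => ?_⟩
  have hprod : Integrable (fun x => (f x - k j x) * g i x) L :=
    ((hL.mem_Linfty_iff.1 hf).sub (hkL j)).integrable_mul (memLp_one_iff_integrable.2 (hgL i))
  rw [hL.integral_eq hprod]
  exact hj i

end Represents

theorem stmt_11_general (hσ : IsSigmaAlg 𝒜) {lam mu : BAMeasure 𝒜}
    (hca : CountablyAdditive lam) (hlam : ∀ A ∈ 𝒜.sets, 0 ≤ lam.toFun A)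
    (hmu : ∀ A ∈ 𝒜.sets, 0 ≤ mu.toFun A) (hac : AbsCont mu lam)
    (hnull : ∀ A ∈ 𝒜.sets, var mu A = 0 → var lam A = 0)
    {K : Set (Ω → ℝ)} (hK : Convex ℝ K) :
    weakStarCl lam (boundedMinorants lam K) =
      cl1 mu (boundedMinorants lam K) ∩ Linfty lam := by
  let : MeasurableSpace Ω := 𝒜.toMeasurableSpace hσ
  obtain ⟨L, _, hL⟩ := exists_represents (fun _ => Iff.rfl) hca hlam
  obtain ⟨M, _, hM⟩ := exists_represents (fun _ => Iff.rfl) (hca.of_absCont hlam hmu hac) hmu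
  have hML : M ≪ L := hM.absolutelyContinuous hL fun A hA => hac.var_eq_zero hmu hA
  have hLM : L ≪ M := hL.absolutelyContinuous hM hnull
  refine Subset.antisymm (subset_inter ?_ fun f hf => hf.1) ?_
  · exact hL.weakStarCl_subset_cl1 hM hML (hL.convex_boundedMinorants hK) inter_subset_right
  · exact hL.cl1_inter_Linfty_subset_weakStarCl hM hML hLM inter_subset_right
      (fun h hh => hh.1.1.2) fun h hh B hB => hL.min_mem_boundedMinorants hh hB

/-- Theorem 19: for `𝒜` a σ-algebra and `λ` countably additive and nonnegative, with `K`,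
`C` as in Theorem 18 and `D = C ∩ L^∞(λ)`, the weak* closure of `D` in `L^∞(λ)` equals
`(closure of D in L¹(μ)) ∩ L^∞(λ)` for every `μ ∈ 𝔓_*(λ; K)`. -/
theorem stmt_11 {Ω : Type*} {𝒜 : SetAlg Ω} (hσ : IsSigmaAlg 𝒜)
    (lam : BAMeasure 𝒜) (hca : CountablyAdditive lam)
    (hpos : ∀ A ∈ 𝒜.sets, 0 ≤ lam.toFun A)
    (K : Set (Ω → ℝ)) (hK : K ⊆ L0pos lam) (hconv : Convex ℝ K)
    (hbdd : BddL0 lam K)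
    (C : Set (Ω → ℝ)) (hC : C = {f ∈ L0pos lam | ∃ g ∈ K, ∀ ω, f ω ≤ g ω})
    (D : Set (Ω → ℝ)) (hD : D = C ∩ Linfty lam) :
    ∀ mu : BAMeasure 𝒜, PStarWith lam K mu →
      weakStarCl lam D = cl1 mu D ∩ Linfty lam := by
  rintro mu ⟨⟨⟨-, hmu⟩, ⟨c, hc, hle⟩, hnull⟩, -⟩
  subst hC hD
  exact stmt_11_general hσ hca hpos hmu (absCont_of_var_le hc hle)
    (fun A hA h => (hnull A hA).1 (var_eq_of_nonneg hmu hA ▸ h)) hconv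

end FA
end

section
/- Let f, f_n ∈ L⁰(λ) for n=1,2,… be such that lim_k |λ|*( inf_{n>k} f_n < f − c ) = 0 for every c>0. Then liminf_n f_n ≥ f, λ-a.s. -/
open Set Filter Topology

namespace FA

variable {Ω : Type*} {𝒜 : SetAlg Ω}

theorem SetAlg.univ_mem (𝒜 : SetAlg Ω) : univ ∈ 𝒜.sets := by
  simpa only [compl_empty] using 𝒜.compl_mem 𝒜.empty_mem

theorem var_nonneg (lam : BAMeasure 𝒜) (A : Set Ω) : 0 ≤ var lam A :=
  add_nonneg
    (Real.sSup_nonneg'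
      ⟨0, ⟨∅, 𝒜.empty_mem, empty_subset A, lam.map_empty.symm⟩, le_rfl⟩)
    (Real.sSup_nonneg'
      ⟨0, ⟨∅, 𝒜.empty_mem, empty_subset A, by rw [lam.map_empty, neg_zero]⟩, le_rfl⟩)

theorem outer_nonneg (lam : BAMeasure 𝒜) (B : Set Ω) : 0 ≤ outer lam B := by
  apply Real.sInf_nonneg
  rintro _ ⟨A, -, -, rfl⟩
  exact var_nonneg lam A

theorem outer_mono (lam : BAMeasure 𝒜) {B C : Set Ω} (hBC : B ⊆ C) :
    outer lam B ≤ outer lam C := by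
  apply csInf_le_csInf
  · refine ⟨0, ?_⟩
    rintro _ ⟨A, -, -, rfl⟩
    exact var_nonneg lam A
  · exact ⟨_, univ, 𝒜.univ_mem, subset_univ C, rfl⟩
  · rintro _ ⟨A, hA, hCA, rfl⟩
    exact ⟨A, hA, hBC.trans hCA, rfl⟩

theorem outer_eq_zero_of_tendsto {ι : Type*} {l : Filter ι} [l.NeBot] (lam : BAMeasure 𝒜)
    {B : Set Ω} {C : ι → Set Ω} (hBC : ∀ᶠ i in l, B ⊆ C i)
    (hC : Tendsto (fun i => outer lam (C i)) l (𝓝 0)) : outer lam B = 0 :=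
  le_antisymm (ge_of_tendsto hC (hBC.mono fun _ => outer_mono lam)) (outer_nonneg lam B)

theorem iInf_gt_le_liminf {ι α : Type*} [Preorder ι] [NoTopOrder ι] [CompleteLattice α]
    (u : ι → α) (k : ι) : (⨅ (n : ι) (_ : k < n), u n) ≤ liminf u atTop :=
  le_liminf_of_le (by isBoundedDefault) ((eventually_gt_atTop k).mono iInf₂_le)

theorem stmt_17_general {ι α : Type*} [Preorder ι] [IsDirectedOrder ι] [Nonempty ι]
    [NoTopOrder ι] [CompleteLattice α] (lam : BAMeasure 𝒜) (u : ι → Ω → α) (g : Ω → α)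
    (hu : Tendsto (fun k => outer lam {ω | (⨅ (n : ι) (_ : k < n), u n ω) < g ω}) atTop (𝓝 0)) :
    outer lam {ω | liminf (fun n => u n ω) atTop < g ω} = 0 :=
  outer_eq_zero_of_tendsto lam
    (Eventually.of_forall fun k ω hω => (iInf_gt_le_liminf (fun n => u n ω) k).trans_lt hω) hu

/-- Lemma 29: if `lim_k |λ|*(inf_{n>k} f_n < f - c) = 0` for every `c > 0`, then
`liminf_n f_n ≥ f` `λ`-a.s. -/
theorem stmt_17 {Ω : Type*} {𝒜 : SetAlg Ω} (lam : BAMeasure 𝒜)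
    (f : Ω → ℝ) (hf : f ∈ L0 lam) (fs : ℕ → Ω → ℝ) (hfs : ∀ n, fs n ∈ L0 lam)
    (hyp : ∀ c > (0:ℝ), Tendsto (fun k => outer lam
      {ω | (⨅ (n : ℕ) (_ : k < n), ((fs n ω : ℝ) : EReal)) < ((f ω - c : ℝ) : EReal)})
      atTop (𝓝 0)) :
    ∀ c > (0:ℝ), outer lam
      {ω | Filter.liminf (fun n => ((fs n ω : ℝ) : EReal)) atTop
        < ((f ω - c : ℝ) : EReal)} = 0 :=
  fun c hc => stmt_17_general lam (fun n ω => (fs n ω : EReal))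
    (fun ω => ((f ω - c : ℝ) : EReal)) (hyp c hc)

end FA
end
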